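/- arXiv:1607.03183 — 3 statements merged into one kernel-verified Lean document; each statement's English description precedes it below -/
import Mathlib

section
/- Let n ≥ 1 and 1 ≤ k ≤ n. The augmented mean-field pseudo-entropy functional H_{aMF,k}, defined on probability distributions μ on {-1,1}^n by H_{aMF,k}(μ) = min over S ⊆ Fin n with |S| ≤ k of [ H(μ_S) + Σ_{i ∉ S} H(μ_i | μ_S) ], is concave: for distributions μ¹, μ² on {-1,1}^n and λ ∈ [0,1], H_{aMF,k}(λμ¹ + (1−λ)μ²) ≥ λ·H_{aMF,k}(μ¹) + (1−λ)·H_{aMF,k}(μ²). -/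
/-!
For fixed `S`, the entropy of `μ_S` and each conditional entropy `H(μ_i | μ_S)` are concave in `μ`,
and a minimum of concave functions is concave. The first is concave because `-t log t` is, and `μ_S`
is linear in `μ`. The second is a sum over `x_S` of `μ_S(x_S) · H(μ(x_S, x_i = ·) / μ_S(x_S))`: the
perspective `(p, m) ↦ m · H(p / m)` of the entropy, evaluated at a pair linear in `μ`, and the
perspective of a concave function is concave.
-/

open scoped BigOperators

noncomputable section

/-- The set `{-1, 1}` of spin values. -/
abbrev B : Finset ℝ := {-1, 1}

/-- The discrete cube `{-1,1}^n`. -/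
abbrev Cube (n : ℕ) := Fin n → ↥B

/-- Assignments of spin values to the coordinates in `S`. -/
abbrev Asg {n : ℕ} (S : Finset (Fin n)) := ↥S → ↥B

/-- Shannon entropy (in nats), with the convention `0 * log 0 = 0`. -/
def ent {D : Type*} [Fintype D] (p : D → ℝ) : ℝ := -∑ d, p d * Real.log (p d)

/-- Restriction of `x ∈ {-1,1}^n` to the coordinates in `S`. -/
def restr {n : ℕ} (S : Finset (Fin n)) (x : Cube n) : Asg S := fun i => x i.1

/-- Marginal distribution of `μ` on the coordinates in `S`. -/
def margS {n : ℕ} (μ : Cube n → ℝ) (S : Finset (Fin n)) (y : Asg S) : ℝ :=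
  ∑ x : Cube n, if restr S x = y then μ x else 0

/-- Conditional entropy `H(μ_i | μ_S)` of coordinate `i` given the coordinates in `S`:
`Σ_{x_S} μ_S(x_S) · H(μ_{i | x_S})`, where `μ_{i | x_S}(a) = μ_{S∪{i}}(x_S, a)/μ_S(x_S)`
(terms with `μ_S(x_S) = 0` contribute `0`). -/
def condEntD {n : ℕ} (μ : Cube n → ℝ) (S : Finset (Fin n)) (i : Fin n) : ℝ :=
  ∑ y : Asg S, margS μ S y *
    ent (fun a : ↥B =>
      (∑ x : Cube n, if restr S x = y ∧ x i = a then μ x else 0) / margS μ S y)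

/-- The augmented mean-field pseudo-entropy functional `H_{aMF,k}(μ)`:
the minimum over `S ⊆ Fin n`, `|S| ≤ k`, of `H(μ_S) + Σ_{i ∉ S} H(μ_i | μ_S)`. -/
def aMF {n : ℕ} (μ : Cube n → ℝ) (k : ℕ) : ℝ :=
  (Finset.univ.filter (fun S : Finset (Fin n) => S.card ≤ k)).inf'
    ⟨∅, Finset.mem_filter.mpr ⟨Finset.mem_univ _, by simp⟩⟩
    (fun S => ent (margS μ S) + ∑ i ∈ Sᶜ, condEntD μ S i)

section ConcaveOn

variable {𝕜 E β ι : Type*} [Semiring 𝕜] [PartialOrder 𝕜] [AddCommMonoid E] [AddCommMonoid β]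
  {s : Set E} {t : Finset ι} {f : ι → E → β}

theorem concaveOn_finsetSum [SMul 𝕜 E] [PartialOrder β] [IsOrderedAddMonoid β] [Module 𝕜 β]
    (hs : Convex 𝕜 s) (hf : ∀ i ∈ t, ConcaveOn 𝕜 s (f i)) :
    ConcaveOn 𝕜 s fun x => ∑ i ∈ t, f i x := by
  simpa only [Finset.sum_fn] using
    Finset.sum_induction f (ConcaveOn 𝕜 s) (fun _ _ => ConcaveOn.add) (concaveOn_const 0 hs) hf

theorem concaveOn_finsetInf' [SMul 𝕜 E] [LinearOrder β] [IsOrderedAddMonoid β] [Module 𝕜 β]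
    [PosSMulStrictMono 𝕜 β] (ht : t.Nonempty) (hf : ∀ i ∈ t, ConcaveOn 𝕜 s (f i)) :
    ConcaveOn 𝕜 s fun x => t.inf' ht (f · x) := by
  simpa only [← Finset.inf'_apply] using
    Finset.inf'_induction ht f (fun _ hg _ hh => hg.inf hh) hf

end ConcaveOn

section Perspective

variable {𝕜 E β : Type*} [Field 𝕜] [AddCommGroup E] [Module 𝕜 E] [AddCommGroup β] [Module 𝕜 β]

/-- The perspective `(x, m) ↦ m • f (x / m)` of a function `f`, with value `0` at `m = 0`. -/
def perspective (f : E → β) (q : E × 𝕜) : β := q.2 • f (q.2⁻¹ • q.1)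

theorem perspective_smul_mk (f : E → β) (m : 𝕜) (x : E) :
    perspective f (m • x, m) = m • f x := by
  rcases eq_or_ne m 0 with rfl | hm
  · simp [perspective]
  · simp [perspective, hm]

variable [LinearOrder 𝕜]

variable (𝕜) in
/-- The cone over `s × {1}`, the domain of the perspective of a function on `s`. Its apex `(0, 0)`
is kept, so that events of mass zero are covered. -/
def perspectiveCone (s : Set E) : Set (E × 𝕜) :=
  {q | ∃ m : 𝕜, 0 ≤ m ∧ ∃ x ∈ s, (m • x, m) = q}

variable [IsStrictOrderedRing 𝕜]

theorem mk_mem_perspectiveCone_Ici {ι : Type*} {p : ι → 𝕜} {m : 𝕜} (hp : 0 ≤ p) (hm : 0 ≤ m)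
    (hpm : ∀ i, p i ≤ m) : (p, m) ∈ perspectiveCone 𝕜 (Set.Ici (0 : ι → 𝕜)) := by
  refine ⟨m, hm, m⁻¹ • p, smul_nonneg (inv_nonneg.2 hm) hp, Prod.ext ?_ rfl⟩
  rcases eq_or_ne m 0 with rfl | hm'
  · simpa using (le_antisymm hpm hp).symm
  · exact smul_inv_smul₀ hm' p

variable [PartialOrder β] [IsOrderedAddMonoid β] [PosSMulMono 𝕜 β] {s : Set E} {f : E → β}

-- Stated without division, so that `a = b = 0` is allowed; it says the hypograph is convex.
theorem exists_mem_add_smul_eq_of_concaveOn (hf : ConcaveOn 𝕜 s f) {x y : E} (hx : x ∈ s)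
    (hy : y ∈ s) {a b : 𝕜} (ha : 0 ≤ a) (hb : 0 ≤ b) :
    ∃ z ∈ s, (a + b) • z = a • x + b • y ∧ a • f x + b • f y ≤ (a + b) • f z := by
  obtain ⟨⟨z, r⟩, ⟨hz, hr⟩, h⟩ := hf.convex_hypograph.exists_mem_add_smul_eq
    (x := (x, f x)) (y := (y, f y)) ⟨hx, le_rfl⟩ ⟨hy, le_rfl⟩ ha hb
  obtain ⟨hz_eq, hr_eq⟩ := Prod.ext_iff.1 h
  refine ⟨z, hz, hz_eq, ?_⟩
  calc a • f x + b • f y = (a + b) • r := hr_eq.symm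
    _ ≤ (a + b) • f z := smul_le_smul_of_nonneg_left hr (add_nonneg ha hb)

theorem concaveOn_perspective (hf : ConcaveOn 𝕜 s f) :
    ConcaveOn 𝕜 (perspectiveCone 𝕜 s) (perspective f) := by
  have exists_combination {x y : E} (hx : x ∈ s) (hy : y ∈ s) {m l a b : 𝕜} (hm : 0 ≤ m)
      (hl : 0 ≤ l) (ha : 0 ≤ a) (hb : 0 ≤ b) :
      ∃ z ∈ s, a • (m • x, m) + b • (l • y, l) = ((a * m + b * l) • z, a * m + b * l) ∧
        a • m • f x + b • l • f y ≤ (a * m + b * l) • f z := by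
    obtain ⟨z, hz, hz_eq, hle⟩ :=
      exists_mem_add_smul_eq_of_concaveOn hf hx hy (mul_nonneg ha hm) (mul_nonneg hb hl)
    exact ⟨z, hz, by simp [hz_eq, mul_smul], by simpa only [mul_smul] using hle⟩
  constructor
  · rintro _ ⟨m, hm, x, hx, rfl⟩ _ ⟨l, hl, y, hy, rfl⟩ a b ha hb -
    obtain ⟨z, hz, hz_eq, -⟩ := exists_combination hx hy hm hl ha hb
    exact ⟨a * m + b * l, by positivity, z, hz, hz_eq.symm⟩
  · rintro _ ⟨m, hm, x, hx, rfl⟩ _ ⟨l, hl, y, hy, rfl⟩ a b ha hb -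
    obtain ⟨z, -, hz_eq, hle⟩ := exists_combination hx hy hm hl ha hb
    simpa only [hz_eq, perspective_smul_mk] using hle

end Perspective

section Entropy

variable {D : Type*} [Fintype D]

theorem ent_eq_sum_negMulLog (p : D → ℝ) : ent p = ∑ d, Real.negMulLog (p d) := by
  simp only [ent, Real.negMulLog, neg_mul, Finset.sum_neg_distrib]

theorem concaveOn_ent : ConcaveOn ℝ (Set.Ici (0 : D → ℝ)) ent := by
  simp only [funext ent_eq_sum_negMulLog]
  exact concaveOn_finsetSum (convex_Ici 0) fun d _ =>
    (Real.concaveOn_negMulLog.comp_linearMap (LinearMap.proj (φ := fun _ : D => ℝ) d)).subset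
      (fun _ hp => hp d) (convex_Ici 0)

end Entropy

section EventMass

variable {Ω : Type*} [Fintype Ω]

/-- The mass that `μ` gives to the event `P`, as a linear functional of `μ`. -/
def eventMass (P : Ω → Prop) [DecidablePred P] : (Ω → ℝ) →ₗ[ℝ] ℝ where
  toFun μ := ∑ x, if P x then μ x else 0
  map_add' μ ν := by simp only [← Finset.sum_filter, Pi.add_apply, Finset.sum_add_distrib]
  map_smul' c μ := by simp [← Finset.sum_filter, Finset.mul_sum]

variable {μ : Ω → ℝ} {P Q : Ω → Prop} [DecidablePred P] [DecidablePred Q]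

theorem eventMass_apply : eventMass P μ = ∑ x, if P x then μ x else 0 := rfl

theorem eventMass_nonneg (hμ : 0 ≤ μ) : 0 ≤ eventMass P μ := by
  rw [eventMass_apply, ← Finset.sum_filter]
  exact Finset.sum_nonneg fun x _ => hμ x

theorem eventMass_mono (hμ : 0 ≤ μ) (hPQ : ∀ x, P x → Q x) : eventMass P μ ≤ eventMass Q μ := by
  rw [eventMass_apply, eventMass_apply, ← Finset.sum_filter, ← Finset.sum_filter]
  exact Finset.sum_le_sum_of_subset_of_nonneg (Finset.monotone_filter_right _ fun x _ => hPQ x)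
    fun x _ _ => hμ x

end EventMass

section Cube

variable {n : ℕ}

theorem concaveOn_ent_margS (S : Finset (Fin n)) :
    ConcaveOn ℝ (Set.Ici (0 : Cube n → ℝ)) fun μ => ent (margS μ S) :=
  (concaveOn_ent.comp_linearMap (LinearMap.pi fun y => eventMass (restr S · = y))).subset
    (fun _ hμ _ => eventMass_nonneg hμ) (convex_Ici 0)

/-- The masses of `{x_S = y, x_i = a}`, indexed by `a`, together with the mass of `{x_S = y}`: the
numerators and the denominator of the conditional distribution `μ_{i | y}`. -/
def condMass (S : Finset (Fin n)) (i : Fin n) (y : Asg S) : (Cube n → ℝ) →ₗ[ℝ] (B → ℝ) × ℝ :=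
  (LinearMap.pi fun a => eventMass fun x => restr S x = y ∧ x i = a).prod
    (eventMass (restr S · = y))

theorem condMass_mem_perspectiveCone {μ : Cube n → ℝ} (hμ : 0 ≤ μ) (S : Finset (Fin n))
    (i : Fin n) (y : Asg S) : condMass S i y μ ∈ perspectiveCone ℝ (Set.Ici (0 : B → ℝ)) :=
  mk_mem_perspectiveCone_Ici (fun _ => eventMass_nonneg hμ) (eventMass_nonneg hμ)
    fun _ => eventMass_mono hμ fun _ => And.left

theorem condEntD_eq_sum_perspective (μ : Cube n → ℝ) (S : Finset (Fin n)) (i : Fin n) :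
    condEntD μ S i = ∑ y, perspective ent (condMass S i y μ) := by
  simp only [condEntD, div_eq_inv_mul]
  rfl

theorem concaveOn_condEntD (S : Finset (Fin n)) (i : Fin n) :
    ConcaveOn ℝ (Set.Ici (0 : Cube n → ℝ)) fun μ => condEntD μ S i := by
  simp only [condEntD_eq_sum_perspective]
  exact concaveOn_finsetSum (convex_Ici 0) fun y _ =>
    ((concaveOn_perspective concaveOn_ent).comp_linearMap (condMass S i y)).subset
      (fun _ hμ => condMass_mem_perspectiveCone hμ S i y) (convex_Ici 0)

theorem augMeanField_concave_general (k : ℕ) :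
    ConcaveOn ℝ (Set.Ici (0 : Cube n → ℝ)) fun μ => aMF μ k :=
  concaveOn_finsetInf' _ fun S _ =>
    (concaveOn_ent_margS S).add
      (concaveOn_finsetSum (convex_Ici 0) fun i _ => concaveOn_condEntD S i)

end Cube

/-- Concavity of the augmented mean-field pseudo-entropy functional `H_{aMF,k}`:
for distributions `μ¹, μ²` on `{-1,1}^n` and `λ ∈ [0,1]`,
`H_{aMF,k}(λμ¹ + (1−λ)μ²) ≥ λ·H_{aMF,k}(μ¹) + (1−λ)·H_{aMF,k}(μ²)`. -/
theorem augMeanField_concave (n k : ℕ) (hn : 1 ≤ n) (hk1 : 1 ≤ k) (hkn : k ≤ n)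
    (μ₁ μ₂ : Cube n → ℝ)
    (hμ₁0 : ∀ x, 0 ≤ μ₁ x) (hμ₁1 : ∑ x : Cube n, μ₁ x = 1)
    (hμ₂0 : ∀ x, 0 ≤ μ₂ x) (hμ₂1 : ∑ x : Cube n, μ₂ x = 1)
    (lam : ℝ) (hlam : lam ∈ Set.Icc (0 : ℝ) 1) :
    lam * aMF μ₁ k + (1 - lam) * aMF μ₂ k
      ≤ aMF (fun x => lam * μ₁ x + (1 - lam) * μ₂ x) k :=
  (augMeanField_concave_general k).2 hμ₁0 hμ₂0 hlam.1 (sub_nonneg.2 hlam.2)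
    (add_sub_cancel lam 1)
end
end

section
/- (Main theorem, dense case.) There exists a universal constant C > 0 such that the following holds. Let n ≥ 1, Δ ∈ (0,1], ε ∈ (0,1), and let J : Fin n → Fin n → ℝ be Δ-dense, i.e. Δ·|J i j| ≤ J_T/n² for all i ≠ j, where J_T = Σ_{i,j} |J i j|. Let Z = Σ_{x ∈ {-1,1}^n} exp(Σ_{i,j} J i j · x i · x j), let k = ⌈C/(Δ·ε²)⌉, and let V be the supremum, over all SA(k+2)-consistent families (μ_S) on Fin n, of Σ_{i,j} J i j · E_{μ_{{i,j}}}[x i · x j] + min over S ⊆ Fin n with |S| ≤ k of [ H(μ_S) + Σ_{i ∉ S} H(μ_i | μ_S) ]. Then log Z ≤ V ≤ log Z + ε·J_T. -/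
open scoped BigOperators

noncomputable section

/-- Restriction of an assignment on `S` to a subset `R ⊆ S`. -/
def res {n : ℕ} {R S : Finset (Fin n)} (h : R ⊆ S) (y : Asg S) : Asg R :=
  fun i => y ⟨i.1, h i.2⟩

/-- The marginal on `R ⊆ S` of a local distribution on assignments to `S`. -/
def margTo {n : ℕ} {S : Finset (Fin n)} (μ : Asg S → ℝ) {R : Finset (Fin n)}
    (h : R ⊆ S) (z : Asg R) : ℝ :=
  ∑ y : Asg S, if res h y = z then μ y else 0

/-- A level-`k` Sherali–Adams consistent family on `Fin n`: local distributions
`μ_S` over assignments to each `S ⊆ Fin n` with `|S| ≤ k`, nonnegative, summing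
to `1`, and consistent on intersections whenever `|S ∪ T| ≤ k`. -/
structure SAFamily (n k : ℕ) where
  μ : (S : Finset (Fin n)) → Asg S → ℝ
  nonneg : ∀ S : Finset (Fin n), S.card ≤ k → ∀ y : Asg S, 0 ≤ μ S y
  sum_one : ∀ S : Finset (Fin n), S.card ≤ k → ∑ y : Asg S, μ S y = 1
  consistent : ∀ S T : Finset (Fin n), (S ∪ T).card ≤ k → ∀ z : Asg (S ∩ T),
    margTo (μ S) Finset.inter_subset_left z = margTo (μ T) Finset.inter_subset_right z

/-- Extension of an assignment on `S` to `insert i S` with value `a` at `i`. -/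
def extAsg {n : ℕ} {S : Finset (Fin n)} (i : Fin n) (y : Asg S) (a : ↥B) :
    Asg (insert i S) :=
  fun j => if h : j.1 = i then a else
    y ⟨j.1, by
      rcases Finset.mem_insert.mp j.2 with h' | h'
      · exact absurd h' h
      · exact h'⟩

/-- The conditional entropy `H(μ_i | μ_S)` computed from the local distributions
`μ_{S∪{i}}` and `μ_S` of an SA family (terms with `μ_S(x_S) = 0` contribute `0`). -/
def condEnt {n k : ℕ} (F : SAFamily n k) (S : Finset (Fin n)) (i : Fin n) : ℝ :=
  ∑ y : Asg S, F.μ S y *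
    ent (fun a : ↥B => F.μ (insert i S) (extAsg i y a) / F.μ S y)

/-- The pairwise correlation `E_{μ_{{i,j}}}[x_i x_j]` of an SA family. -/
def pairExp {n k : ℕ} (F : SAFamily n k) (i j : Fin n) : ℝ :=
  ∑ y : Asg ({i, j} : Finset (Fin n)),
    F.μ {i, j} y * (y ⟨i, by simp⟩ : ℝ) * (y ⟨j, by simp⟩ : ℝ)

/-- The augmented mean-field pseudo-entropy of an SA family at level `k'`:
`min_{|S| ≤ k'} [ H(μ_S) + Σ_{i ∉ S} H(μ_i | μ_S) ]`. -/
def pseudoEnt {n k : ℕ} (F : SAFamily n k) (k' : ℕ) : ℝ :=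
  (Finset.univ.filter (fun S : Finset (Fin n) => S.card ≤ k')).inf'
    ⟨∅, Finset.mem_filter.mpr ⟨Finset.mem_univ _, by simp⟩⟩
    (fun S => ent (F.μ S) + ∑ i ∈ Sᶜ, condEnt F S i)

/-- The total interaction strength `J_T = Σ_{i,j} |J i j|`. -/
def JT {n : ℕ} (J : Fin n → Fin n → ℝ) : ℝ := ∑ i : Fin n, ∑ j : Fin n, |J i j|

/-- `E[x_i | x_S]`, computed from `μ_{S∪{i}}` and `μ_S`
(equal to `0` when `μ_S(x_S) = 0`, since `·/0 = 0` in `ℝ`). -/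
def condExp1 {n k : ℕ} (F : SAFamily n k) (S : Finset (Fin n)) (y : Asg S) (i : Fin n) : ℝ :=
  (∑ z : Asg (S ∪ {i}), if res Finset.subset_union_left z = y then
      F.μ (S ∪ {i}) z * (z ⟨i, by simp⟩ : ℝ) else 0) / F.μ S y

/-- `E[x_i x_j | x_S]`, computed from `μ_{S∪{i,j}}` and `μ_S`. -/
def condExp2 {n k : ℕ} (F : SAFamily n k) (S : Finset (Fin n)) (y : Asg S) (i j : Fin n) : ℝ :=
  (∑ z : Asg (S ∪ {i, j}), if res Finset.subset_union_left z = y then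
      F.μ (S ∪ {i, j}) z * (z ⟨i, by simp⟩ : ℝ) * (z ⟨j, by simp⟩ : ℝ) else 0) / F.μ S y

/-- `Σ_{x_S} μ_S(x_S) ( E[x_i x_j | x_S] − E[x_i | x_S] E[x_j | x_S] )`:
the average conditional covariance of coordinates `i, j` given `S`. -/
def condCov {n k : ℕ} (F : SAFamily n k) (S : Finset (Fin n)) (i j : Fin n) : ℝ :=
  ∑ y : Asg S, F.μ S y * (condExp2 F S y i j - condExp1 F S y i * condExp1 F S y j)

/-!
All densities are taken relative to the uniform measure.

Upper bound. Given a consistent family `f` and a small set `S`, sample the coordinates in `S` from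
`f S` and then the others independently from their conditional distributions given `S`. The
entropy of this genuine distribution is the mean-field entropy at `S`, so by the Gibbs variational
principle the value of the family exceeds `log Z` by at most the change of energy. That change
comes from the average conditional covariances given `S`. By the law of total variance,
conditioning on one more coordinate `j` lowers the total conditional variance by at least the sum
over `i` of the mean squared covariances of `i` with `j`; the total variance is at most `n`, so
`k` greedy steps find a set `S` at which all squared errors add up to at most `n² / (k + 1)`, and
Cauchy–Schwarz bounds the change of energy.

Lower bound. For the marginals of the Gibbs distribution, Gibbs' inequality shows that every
mean-field entropy dominates the true entropy.
-/

section Weighted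

variable {D : Type*} [Fintype D]

lemma sq_expect_mul_mul_le {w : D → ℝ} (hw : ∀ d, 0 ≤ w d) (u v : D → ℝ) :
    (𝔼 d, w d * u d * v d) ^ 2 ≤ (𝔼 d, w d * u d ^ 2) * 𝔼 d, w d * v d ^ 2 := by
  have h := Finset.univ.expect_mul_sq_le_sq_mul_sq (fun d ↦ √(w d) * u d) (fun d ↦ √(w d) * v d)
  have hsq : ∀ d, √(w d) * u d * (√(w d) * v d) = w d * u d * v d := fun d ↦ by
    rw [mul_mul_mul_comm, Real.mul_self_sqrt (hw d), mul_assoc]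
  simpa only [hsq, mul_pow, Real.sq_sqrt (hw _)] using h

lemma sq_covariance_add_sq_mean_le {w : D → ℝ} (hw : ∀ d, 0 ≤ w d) (hw1 : 𝔼 d, w d = 1)
    (q : D → ℝ) {φ : D → ℝ} (hφ : ∀ d, |φ d| ≤ 1) :
    (𝔼 d, w d * (q d * φ d) - (𝔼 d, w d * q d) * 𝔼 d, w d * φ d) ^ 2 + (𝔼 d, w d * q d) ^ 2 ≤
      𝔼 d, w d * q d ^ 2 := by
  set m := 𝔼 d, w d * q d with hm
  have hcov : 𝔼 d, w d * (q d - m) * φ d = 𝔼 d, w d * (q d * φ d) - m * 𝔼 d, w d * φ d := by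
    rw [Finset.mul_expect, ← Finset.expect_sub_distrib]
    exact Finset.expect_congr rfl fun d _ ↦ by ring
  have hvar : 𝔼 d, w d * (q d - m) ^ 2 = 𝔼 d, w d * q d ^ 2 - m ^ 2 := by
    calc 𝔼 d, w d * (q d - m) ^ 2
        = 𝔼 d, (w d * q d ^ 2 - 2 * m * (w d * q d) + m ^ 2 * w d) :=
          Finset.expect_congr rfl fun d _ ↦ by ring
      _ = 𝔼 d, w d * q d ^ 2 - 2 * m * m + m ^ 2 * 1 := by
          rw [Finset.expect_add_distrib, Finset.expect_sub_distrib, ← Finset.mul_expect,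
            ← Finset.mul_expect, hw1, ← hm]
      _ = 𝔼 d, w d * q d ^ 2 - m ^ 2 := by ring
  have hφ1 : 𝔼 d, w d * φ d ^ 2 ≤ 1 :=
    hw1 ▸ Finset.expect_le_expect fun d _ ↦
      mul_le_of_le_one_right (hw d) ((sq_le_one_iff_abs_le_one _).2 (hφ d))
  have hvar_nonneg : 0 ≤ 𝔼 d, w d * (q d - m) ^ 2 :=
    Finset.expect_nonneg fun d _ ↦ mul_nonneg (hw d) (sq_nonneg _)
  have hcs := (sq_expect_mul_mul_le hw (fun d ↦ q d - m) φ).trans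
    (mul_le_of_le_one_right hvar_nonneg hφ1)
  rw [hcov, hvar] at hcs
  linarith

lemma mul_log_le_mul_log_add_sub {q r : ℝ} (hq : 0 ≤ q) (hr : 0 ≤ r) (hqr : q ≠ 0 → r ≠ 0) :
    q * Real.log r ≤ q * Real.log q + (r - q) := by
  rcases hq.eq_or_lt with rfl | hq
  · simpa using hr
  have hr := hr.lt_of_ne' (hqr hq.ne')
  have h := mul_le_mul_of_nonneg_left (Real.log_le_sub_one_of_pos (div_pos hr hq)) hq.le
  rw [Real.log_div hr.ne' hq.ne', mul_sub, mul_sub, mul_div_cancel₀ _ hq.ne'] at h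
  linarith

lemma expect_mul_log_le_expect_mul_log {q r : D → ℝ} (hq : ∀ d, 0 ≤ q d) (hr : ∀ d, 0 ≤ r d)
    (hqr : ∀ d, q d ≠ 0 → r d ≠ 0) (hsum : 𝔼 d, r d = 𝔼 d, q d) :
    𝔼 d, q d * Real.log (r d) ≤ 𝔼 d, q d * Real.log (q d) := by
  calc 𝔼 d, q d * Real.log (r d)
      ≤ 𝔼 d, (q d * Real.log (q d) + (r d - q d)) :=
        Finset.expect_le_expect fun d _ ↦ mul_log_le_mul_log_add_sub (hq d) (hr d) (hqr d)
    _ = 𝔼 d, q d * Real.log (q d) := by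
        rw [Finset.expect_add_distrib, Finset.expect_sub_distrib, hsum, sub_self, add_zero]

/-- The Gibbs density of the energy `E`, relative to the uniform measure. -/
def gibbsDensity (E : D → ℝ) (d : D) : ℝ := Real.exp (E d) / 𝔼 d', Real.exp (E d')

variable [Nonempty D]

lemma expect_exp_pos (E : D → ℝ) : 0 < 𝔼 d, Real.exp (E d) :=
  Finset.expect_pos (fun _ _ ↦ Real.exp_pos _) Finset.univ_nonempty

lemma gibbsDensity_pos (E : D → ℝ) (d : D) : 0 < gibbsDensity E d :=
  div_pos (Real.exp_pos _) (expect_exp_pos E)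

lemma expect_gibbsDensity (E : D → ℝ) : 𝔼 d, gibbsDensity E d = 1 := by
  simp only [gibbsDensity]
  rw [← Finset.expect_div, div_self (expect_exp_pos E).ne']

lemma expect_mul_log_gibbsDensity (E : D → ℝ) {q : D → ℝ} (hq1 : 𝔼 d, q d = 1) :
    𝔼 d, q d * Real.log (gibbsDensity E d) =
      𝔼 d, q d * E d - Real.log (𝔼 d, Real.exp (E d)) := by
  simp only [gibbsDensity, Real.log_div (Real.exp_pos _).ne' (expect_exp_pos E).ne', Real.log_exp,
    mul_sub, Finset.expect_sub_distrib, ← Finset.expect_mul, hq1, one_mul]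

lemma expect_mul_sub_expect_mul_log_le_log_expect_exp (E : D → ℝ) {q : D → ℝ} (hq : ∀ d, 0 ≤ q d)
    (hq1 : 𝔼 d, q d = 1) :
    𝔼 d, q d * E d - 𝔼 d, q d * Real.log (q d) ≤ Real.log (𝔼 d, Real.exp (E d)) := by
  have h := expect_mul_log_le_expect_mul_log hq (fun d ↦ (gibbsDensity_pos E d).le)
    (fun d _ ↦ (gibbsDensity_pos E d).ne') ((expect_gibbsDensity E).trans hq1.symm)
  rw [expect_mul_log_gibbsDensity E hq1] at h
  linarith

end Weighted

/-- If the total gain at every `S` with `#S ≤ k` were large, then adding the best site `k + 1` times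
would make the potential `Φ` negative. -/
lemma exists_card_le_sum_gain_le {ι : Type*} [Fintype ι] [DecidableEq ι] {Φ : Finset ι → ℝ}
    {gain : Finset ι → ι → ℝ} {k : ℕ} (hΦ : ∀ S : Finset ι, S.card ≤ k + 1 → 0 ≤ Φ S)
    (hdrop : ∀ S j, j ∉ S → S.card ≤ k → Φ (insert j S) + gain S j ≤ Φ S) :
    ∃ S : Finset ι, S.card ≤ k ∧ ∑ j ∈ Sᶜ, gain S j ≤ Fintype.card ι * (Φ ∅ / (k + 1)) := by
  by_contra! hlarge
  set δ : ℝ := Φ ∅ / (k + 1) with hδ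
  have hδ0 : 0 ≤ δ := div_nonneg (hΦ ∅ (by simp)) (by positivity)
  have hstep : ∀ S : Finset ι, S.card ≤ k → ∃ j ∉ S, Φ (insert j S) < Φ S - δ := by
    intro S hS
    have hcard : (Sᶜ.card : ℝ) * δ ≤ Fintype.card ι * δ := by
      gcongr
      exact Finset.card_le_univ _
    obtain ⟨j, hj, hgain⟩ : ∃ j ∈ Sᶜ, δ < gain S j := by
      by_contra! hsmall
      have := Finset.sum_le_card_nsmul _ _ _ hsmall
      rw [nsmul_eq_mul] at this
      linarith [hlarge S hS]
    have hj : j ∉ S := Finset.mem_compl.1 hj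
    exact ⟨j, hj, by linarith [hdrop S j hj hS]⟩
  have hreach : ∀ t ≤ k, ∃ S : Finset ι, S.card = t ∧ Φ S ≤ Φ ∅ - t * δ := by
    intro t
    induction t with
    | zero => exact fun _ ↦ ⟨∅, by simp⟩
    | succ t ih =>
      intro ht
      obtain ⟨S, hS, hΦS⟩ := ih (by lia)
      obtain ⟨j, hj, hΦj⟩ := hstep S (by lia)
      refine ⟨insert j S, by rw [Finset.card_insert_of_notMem hj, hS], ?_⟩
      push_cast
      linarith
  obtain ⟨S, hS, hΦS⟩ := hreach k le_rfl
  obtain ⟨j, hj, hΦj⟩ := hstep S hS.le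
  have hnonneg := hΦ (insert j S) (by rw [Finset.card_insert_of_notMem hj, hS])
  have hδk : (k + 1) * δ = Φ ∅ := by rw [hδ]; field_simp
  linarith

section SiteAverage

open Function

variable {ι α : Type*} [DecidableEq ι] {g : (ι → α) → ℝ} {s : Set ι} {i j : ι}

lemma apply_update_of_dependsOn (hg : DependsOn g s) (hi : i ∉ s) (x : ι → α) (a : α) :
    g (update x i a) = g x :=
  hg fun _ hj ↦ update_of_ne (ne_of_mem_of_not_mem hj hi) _ _

variable [Fintype α]

/-- The average of `g` over the uniformly resampled coordinate `i`, the other coordinates being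
kept. -/
def siteAvg (i : ι) (g : (ι → α) → ℝ) (x : ι → α) : ℝ := 𝔼 a, g (update x i a)

lemma siteAvg_mul_of_dependsOn (hg : DependsOn g s) (hi : i ∉ s) (f : (ι → α) → ℝ) (x : ι → α) :
    siteAvg i (fun y ↦ f y * g y) x = siteAvg i f x * g x := by
  simp only [siteAvg, apply_update_of_dependsOn hg hi, Finset.expect_mul]

lemma siteAvg_comm (hij : i ≠ j) (g : (ι → α) → ℝ) :
    siteAvg i (siteAvg j g) = siteAvg j (siteAvg i g) := by
  ext x
  simp only [siteAvg]
  rw [Finset.expect_comm]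
  simp only [update_comm hij]

variable [Fintype ι]

lemma expect_siteAvg (i : ι) (g : (ι → α) → ℝ) : 𝔼 x, siteAvg i g x = 𝔼 x, g x := by
  let swap : (ι → α) × α → (ι → α) × α := fun p ↦ (update p.1 i p.2, p.1 i)
  have hswap : Involutive swap := fun p ↦ by simp [swap]
  calc 𝔼 x, siteAvg i g x
      = 𝔼 p : (ι → α) × α, g (swap p).1 := (Finset.expect_product' _ _ _).symm
    _ = 𝔼 p : (ι → α) × α, g p.1 := Fintype.expect_equiv hswap.toPerm _ _ fun _ ↦ rfl
    _ = 𝔼 x, 𝔼 _a : α, g x := Finset.expect_product' _ _ fun x _ ↦ g x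
    _ = 𝔼 x, g x := Finset.expect_congr rfl fun x _ ↦ by
        have : Nonempty α := ⟨x i⟩
        exact Fintype.expect_const _

lemma expect_mul_eq_of_siteAvg_insert {h : Finset ι → (ι → α) → ℝ} {T U : Finset ι} (hTU : T ⊆ U)
    (hh : ∀ R j, T ⊆ R → j ∉ R → insert j R ⊆ U → siteAvg j (h (insert j R)) = h R)
    (hg : DependsOn g T) : 𝔼 x, h U x * g x = 𝔼 x, h T x * g x := by
  induction U using Finset.strongInduction with | H U ih => ?_
  rcases hTU.eq_or_ssubset with rfl | hlt
  · rfl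
  obtain ⟨j, hjU, hjT⟩ := Finset.exists_of_ssubset hlt
  have hTj : T ⊆ U.erase j := Finset.subset_erase.2 ⟨hTU, hjT⟩
  have hj := hh (U.erase j) j hTj (Finset.notMem_erase j U) (Finset.insert_erase hjU).le
  rw [Finset.insert_erase hjU] at hj
  rw [← ih _ (Finset.erase_ssubset hjU) hTj fun R i hR hi hiR ↦
    hh R i hR hi (hiR.trans (Finset.erase_subset j U)), ← expect_siteAvg j, ← hj]
  exact Finset.expect_congr rfl fun x _ ↦ siteAvg_mul_of_dependsOn hg (mod_cast hjT) _ _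

end SiteAverage

section ConsistentDensities

open Function

variable {ι α : Type*}

lemma dependsOn_apply (φ : α → ℝ) (i : ι) : DependsOn (fun x : ι → α ↦ φ (x i)) {i} :=
  fun _ _ hxy ↦ congrArg φ (hxy i rfl)

variable [DecidableEq ι] {f : Finset ι → (ι → α) → ℝ} {φ : α → ℝ} {S T U : Finset ι} {i j : ι}

lemma dependsOn_apply_mul_apply (φ : α → ℝ) (i j : ι) :
    DependsOn (fun x : ι → α ↦ φ (x i) * φ (x j)) ({i, j} : Finset ι) :=
  fun x y hxy ↦ by simp only [hxy i (by simp), hxy j (by simp)]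

/-- The density of the distribution obtained by sampling the coordinates in `S` from `f S`, and then
those in `U \ S` independently from their conditional distributions given `S`. -/
def roundedDensity (f : Finset ι → (ι → α) → ℝ) (S U : Finset ι) (x : ι → α) : ℝ :=
  f S x * ∏ i ∈ U \ S, f (insert i S) x / f S x

lemma roundedDensity_self : roundedDensity f S S = f S := by
  ext x
  simp only [roundedDensity, sdiff_self, Finset.bot_eq_empty, Finset.prod_empty, mul_one]

lemma roundedDensity_insert (hiS : i ∉ S) (hiU : i ∉ U) (x : ι → α) :
    roundedDensity f S (insert i U) x = f (insert i S) x / f S x * roundedDensity f S U x := by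
  rw [roundedDensity, Finset.insert_sdiff_of_notMem _ hiS,
    Finset.prod_insert fun h ↦ hiU (Finset.mem_sdiff.1 h).1, roundedDensity]
  ring

lemma log_roundedDensity [Fintype ι] {x : ι → α} (hx : roundedDensity f S Finset.univ x ≠ 0) :
    Real.log (roundedDensity f S Finset.univ x) =
      Real.log (f S x) + ∑ i ∈ Sᶜ, Real.log (f (insert i S) x / f S x) := by
  rw [roundedDensity, ← Finset.compl_eq_univ_sdiff] at hx ⊢
  rw [Real.log_mul (left_ne_zero_of_mul hx) (right_ne_zero_of_mul hx),
    Real.log_prod (Finset.prod_ne_zero_iff.1 (right_ne_zero_of_mul hx))]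

variable [Fintype α] {x : ι → α}

/-- The conditional expectation of `g` given the coordinates in `S`, when all coordinates outside
`insert i S` are frozen and `i` is resampled from the local density `f (insert i S)`. It is `0`
where `f S` vanishes. -/
def condAvg (f : Finset ι → (ι → α) → ℝ) (S : Finset ι) (i : ι) (g : (ι → α) → ℝ) (x : ι → α) :
    ℝ :=
  𝔼 a, f (insert i S) (update x i a) / f S x * g (update x i a)

/-- The conditional expectation of the observable `φ (x i)` given the coordinates in `S`. -/
def localMean (f : Finset ι → (ι → α) → ℝ) (φ : α → ℝ) (S : Finset ι) (i : ι) : (ι → α) → ℝ :=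
  condAvg f S i fun x ↦ φ (x i)

/-- The conditional covariance of `φ (x i)` and `φ (x j)` given the coordinates in `S`. The mixed
moment is computed by first conditioning on `insert j S`. -/
def localCov (f : Finset ι → (ι → α) → ℝ) (φ : α → ℝ) (S : Finset ι) (i j : ι) (x : ι → α) : ℝ :=
  condAvg f S j (fun y ↦ localMean f φ (insert j S) i y * φ (y j)) x -
    localMean f φ S i x * localMean f φ S j x

lemma condAvg_mul_of_dependsOn {g h : (ι → α) → ℝ} {s : Set ι} (hh : DependsOn h s) (hi : i ∉ s) :
    condAvg f S i (fun y ↦ g y * h y) x = condAvg f S i g x * h x := by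
  simp only [condAvg, apply_update_of_dependsOn hh hi, Finset.expect_mul, mul_assoc]

variable [Fintype ι]

/-- A family of densities `f S`, relative to the uniform measure on `ι → α`, of distributions of
the coordinates in `S`; they are consistent under marginalization as long as `#S ≤ K`. -/
structure IsConsistentDensity (K : ℕ) (f : Finset ι → (ι → α) → ℝ) : Prop where
  nonneg : ∀ S : Finset ι, S.card ≤ K → ∀ x, 0 ≤ f S x
  expect_eq_one : ∀ S : Finset ι, S.card ≤ K → 𝔼 x, f S x = 1
  dependsOn : ∀ S, DependsOn (f S) S
  siteAvg_insert : ∀ S : Finset ι, ∀ i ∉ S, S.card < K → siteAvg i (f (insert i S)) = f S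

namespace IsConsistentDensity

variable {K : ℕ} (hf : IsConsistentDensity K f)
include hf

lemma insert_nonneg (hS : S.card < K) (i : ι) (x : ι → α) : 0 ≤ f (insert i S) x :=
  hf.nonneg _ ((Finset.card_insert_le i S).trans hS) x

lemma expect_mul_eq_of_subset (hTU : T ⊆ U) (hU : U.card ≤ K) {g : (ι → α) → ℝ}
    (hg : DependsOn g T) : 𝔼 x, f U x * g x = 𝔼 x, f T x * g x :=
  expect_mul_eq_of_siteAvg_insert hTU (fun R j _ hj hjR ↦ hf.siteAvg_insert R j hj
    ((Finset.card_lt_card (Finset.ssubset_insert hj)).trans_le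
      ((Finset.card_le_card hjR).trans hU))) hg

lemma apply_insert_eq_zero (hi : i ∉ S) (hS : S.card < K) (hx : f S x = 0) :
    f (insert i S) x = 0 := by
  have h := congrFun (hf.siteAvg_insert S i hi hS) x
  rw [hx, siteAvg, Fintype.expect_eq_zero_iff_of_nonneg fun a ↦ hf.insert_nonneg hS i _] at h
  simpa only [update_eq_self, Pi.zero_apply] using congrFun h (x i)

lemma expect_insert_div_eq_one (hi : i ∉ S) (hS : S.card < K) (hx : f S x ≠ 0) :
    𝔼 a, f (insert i S) (update x i a) / f S x = 1 := by
  rw [← Finset.expect_div, ← siteAvg, hf.siteAvg_insert S i hi hS, div_self hx]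

lemma mul_condAvg (hi : i ∉ S) (hS : S.card < K) (g : (ι → α) → ℝ) (x : ι → α) :
    f S x * condAvg f S i g x = siteAvg i (fun y ↦ f (insert i S) y * g y) x := by
  rw [condAvg, siteAvg, Finset.mul_expect]
  refine Finset.expect_congr rfl fun a _ ↦ ?_
  have hx : f S (update x i a) = f S x := apply_update_of_dependsOn (hf.dependsOn S) hi x a
  rw [← mul_assoc, mul_div_cancel_of_imp']
  exact fun h ↦ hf.apply_insert_eq_zero hi hS (hx.trans h)

lemma expect_mul_condAvg (hi : i ∉ S) (hS : S.card < K) (g : (ι → α) → ℝ) :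
    𝔼 x, f S x * condAvg f S i g x = 𝔼 x, f (insert i S) x * g x := by
  simp only [hf.mul_condAvg hi hS, expect_siteAvg i]

lemma dependsOn_condAvg {g : (ι → α) → ℝ} (hg : DependsOn g (insert i S : Finset ι)) :
    DependsOn (condAvg f S i g) S := by
  refine fun x y hxy ↦ ?_
  have hupd : ∀ a, ∀ l ∈ insert i S, update x i a l = update y i a l := by
    intro a l hl
    rcases eq_or_ne l i with rfl | hli
    · simp only [update_self]
    · simp only [update_of_ne hli, hxy l ((Finset.mem_insert.1 hl).resolve_left hli)]
  refine Finset.expect_congr rfl fun a _ ↦ ?_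
  rw [hf.dependsOn S hxy, hf.dependsOn _ (hupd a), hg (hupd a)]

lemma dependsOn_localMean (S : Finset ι) (i : ι) : DependsOn (localMean f φ S i) S :=
  hf.dependsOn_condAvg ((dependsOn_apply φ i).mono (by simp))

lemma condAvg_localMean (hij : i ≠ j) (hi : i ∉ S) (hj : j ∉ S) (hS : S.card + 1 < K) :
    condAvg f S j (localMean f φ (insert j S) i) x = localMean f φ S i x := by
  by_cases hx : f S x = 0
  · simp only [localMean, condAvg, hx, div_zero, zero_mul, Finset.expect_const_zero]
  have hS' : S.card < K := by lia
  have hij' : i ∉ insert j S := by simp [hij, hi]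
  have hji' : j ∉ insert i S := by simp [hij.symm, hj]
  have hSj : (insert j S).card < K := by rwa [Finset.card_insert_of_notMem hj]
  have hSi : (insert i S).card < K := by rwa [Finset.card_insert_of_notMem hi]
  refine mul_left_cancel₀ hx ?_
  calc f S x * condAvg f S j (localMean f φ (insert j S) i) x
      = siteAvg j (siteAvg i fun y ↦ f (insert i (insert j S)) y * φ (y i)) x := by
        rw [hf.mul_condAvg hj hS']
        simp only [localMean, hf.mul_condAvg hij' hSj]
    _ = siteAvg i (siteAvg j fun y ↦ f (insert j (insert i S)) y * φ (y i)) x := by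
        rw [siteAvg_comm hij.symm, Finset.insert_comm]
    _ = siteAvg i (fun y ↦ f (insert i S) y * φ (y i)) x := by
        congr 1
        ext y
        rw [siteAvg_mul_of_dependsOn (dependsOn_apply φ i) (by simpa using hij.symm),
          hf.siteAvg_insert _ j hji' hSi]
    _ = f S x * localMean f φ S i x := (hf.mul_condAvg hi hS' _ x).symm

lemma abs_localMean_le_one (hφ : ∀ a, |φ a| ≤ 1) (hi : i ∉ S) (hS : S.card < K) (x : ι → α) :
    |localMean f φ S i x| ≤ 1 := by
  by_cases hx : f S x = 0
  · simp only [localMean, condAvg, hx, div_zero, zero_mul, Finset.expect_const_zero, abs_zero,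
      zero_le_one]
  have hw : ∀ a, 0 ≤ f (insert i S) (update x i a) / f S x := fun a ↦
    div_nonneg (hf.insert_nonneg hS i _) (hf.nonneg S hS.le x)
  rw [← hf.expect_insert_div_eq_one hi hS hx]
  refine (Finset.abs_expect_le _ _).trans (Finset.expect_le_expect fun a _ ↦ ?_)
  rw [abs_mul, abs_of_nonneg (hw a)]
  exact mul_le_of_le_one_right (hw a) (hφ _)

lemma expect_mul_sq_localMean_le_one (hφ : ∀ a, |φ a| ≤ 1) (hi : i ∉ S) (hS : S.card < K) :
    𝔼 x, f S x * localMean f φ S i x ^ 2 ≤ 1 := by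
  rw [← hf.expect_eq_one S hS.le]
  exact Finset.expect_le_expect fun x _ ↦ mul_le_of_le_one_right (hf.nonneg S hS.le x)
    ((sq_le_one_iff_abs_le_one _).2 (hf.abs_localMean_le_one hφ hi hS x))

lemma expect_sq_localMean_add_sq_localCov_le (hφ : ∀ a, |φ a| ≤ 1) (hij : i ≠ j) (hi : i ∉ S)
    (hj : j ∉ S) (hS : S.card + 1 < K) :
    𝔼 x, f S x * localCov f φ S i j x ^ 2 + 𝔼 x, f S x * localMean f φ S i x ^ 2 ≤
      𝔼 x, f (insert j S) x * localMean f φ (insert j S) i x ^ 2 := by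
  have hS' : S.card < K := by lia
  rw [← hf.expect_mul_condAvg hj hS', ← Finset.expect_add_distrib]
  refine Finset.expect_le_expect fun x _ ↦ ?_
  rw [← mul_add]
  refine mul_le_mul_of_nonneg_left ?_ (hf.nonneg S hS'.le x)
  by_cases hx : f S x = 0
  · simp [localCov, localMean, condAvg, hx]
  have h := sq_covariance_add_sq_mean_le
    (fun a ↦ div_nonneg (hf.insert_nonneg hS' j _) (hf.nonneg S hS'.le x))
    (hf.expect_insert_div_eq_one hj hS' hx) (fun a ↦ localMean f φ (insert j S) i (update x j a)) hφ
  have hi_mean := hf.condAvg_localMean (φ := φ) (x := x) hij hi hj hS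
  have hj_mean : localMean f φ S j x = 𝔼 a, f (insert j S) (update x j a) / f S x * φ a := by
    simp only [localMean, condAvg, update_self]
  rw [localCov, ← hi_mean, hj_mean]
  simpa only [condAvg, update_self] using h

end IsConsistentDensity

end ConsistentDensities

section Rounding

variable {ι α : Type*} [DecidableEq ι] [Fintype ι] [Fintype α] {f : Finset ι → (ι → α) → ℝ}
  {φ : α → ℝ} {S T U : Finset ι} {i j l : ι} {K : ℕ}

/-- The error made on the correlation of `φ (x i)` and `φ (x j)` by rounding from `S`. -/
def pairError (f : Finset ι → (ι → α) → ℝ) (φ : α → ℝ) (S : Finset ι) (i j : ι) : ℝ :=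
  𝔼 x, f {i, j} x * (φ (x i) * φ (x j)) -
    𝔼 x, roundedDensity f S Finset.univ x * (φ (x i) * φ (x j))

/-- The total conditional variance, given the coordinates in `S`, of a `±1`-valued observable `φ` at
the sites outside `S`; it is the potential of the greedy choice of `S`. -/
def residualVar (f : Finset ι → (ι → α) → ℝ) (φ : α → ℝ) (S : Finset ι) : ℝ :=
  ∑ i ∈ Sᶜ, (1 - 𝔼 x, f S x * localMean f φ S i x ^ 2)

/-- The negative of the mean-field entropy at `S`, in terms of densities relative to the uniform
measure: the entropy of `S` plus the conditional entropies of the other coordinates given `S`. -/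
def meanFieldNegEntropy (f : Finset ι → (ι → α) → ℝ) (S : Finset ι) : ℝ :=
  𝔼 x, f S x * Real.log (f S x) +
    ∑ i ∈ Sᶜ, 𝔼 x, f (insert i S) x * Real.log (f (insert i S) x / f S x)

namespace IsConsistentDensity

section

variable (hf : IsConsistentDensity K f)
include hf

lemma dependsOn_roundedDensity (hSU : S ⊆ U) : DependsOn (roundedDensity f S U) U := by
  refine fun x y hxy ↦ ?_
  have hS : f S x = f S y := hf.dependsOn S fun l hl ↦ hxy l (hSU hl)
  rw [roundedDensity, roundedDensity, hS]
  refine congrArg _ (Finset.prod_congr rfl fun i hi ↦ ?_)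
  have hiU : insert i S ⊆ U := Finset.insert_subset (Finset.mem_sdiff.1 hi).1 hSU
  rw [hf.dependsOn (insert i S) fun l hl ↦ hxy l (hiU hl)]

lemma roundedDensity_nonneg (hS : S.card < K) (U : Finset ι) (x : ι → α) :
    0 ≤ roundedDensity f S U x :=
  mul_nonneg (hf.nonneg S hS.le x) (Finset.prod_nonneg fun i _ ↦
    div_nonneg (hf.insert_nonneg hS i x) (hf.nonneg S hS.le x))

lemma roundedDensity_insert_self (hi : i ∉ S) (hS : S.card < K) :
    roundedDensity f S (insert i S) = f (insert i S) := by
  ext x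
  rw [roundedDensity_insert hi hi, roundedDensity_self]
  exact div_mul_cancel_of_imp (hf.apply_insert_eq_zero hi hS)

lemma siteAvg_roundedDensity_insert_mul (hSU : S ⊆ U) (hi : i ∉ U) (g : (ι → α) → ℝ) (x : ι → α) :
    siteAvg i (fun y ↦ roundedDensity f S (insert i U) y * g y) x =
      roundedDensity f S U x * condAvg f S i g x := by
  have hiS : i ∉ S := fun h ↦ hi (hSU h)
  rw [siteAvg, condAvg, Finset.mul_expect]
  refine Finset.expect_congr rfl fun a _ ↦ ?_
  rw [roundedDensity_insert hiS hi, apply_update_of_dependsOn (hf.dependsOn S) hiS,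
    apply_update_of_dependsOn (hf.dependsOn_roundedDensity hSU) hi]
  ring

lemma siteAvg_roundedDensity_insert (hSU : S ⊆ U) (hi : i ∉ U) (hS : S.card < K) :
    siteAvg i (roundedDensity f S (insert i U)) = roundedDensity f S U := by
  ext x
  have h := hf.siteAvg_roundedDensity_insert_mul hSU hi (fun _ ↦ 1) x
  simp only [mul_one, condAvg] at h
  rw [h]
  by_cases hx : f S x = 0
  · simp only [roundedDensity, hx, zero_mul]
  · rw [hf.expect_insert_div_eq_one (fun h ↦ hi (hSU h)) hS hx, mul_one]

lemma expect_roundedDensity_mul_eq_of_subset (hST : S ⊆ T) (hTU : T ⊆ U) (hS : S.card < K)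
    {g : (ι → α) → ℝ} (hg : DependsOn g T) :
    𝔼 x, roundedDensity f S U x * g x = 𝔼 x, roundedDensity f S T x * g x :=
  expect_mul_eq_of_siteAvg_insert hTU (fun _ _ hTR hj _ ↦
    hf.siteAvg_roundedDensity_insert (hST.trans hTR) hj hS) hg

lemma expect_roundedDensity_mul (hS : S.card < K) {g : (ι → α) → ℝ} (hg : DependsOn g S) :
    𝔼 x, roundedDensity f S Finset.univ x * g x = 𝔼 x, f S x * g x := by
  rw [hf.expect_roundedDensity_mul_eq_of_subset subset_rfl (Finset.subset_univ S) hS hg,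
    roundedDensity_self]

lemma expect_roundedDensity (hS : S.card < K) :
    𝔼 x, roundedDensity f S Finset.univ x = 1 := by
  simpa only [mul_one, hf.expect_eq_one S hS.le] using
    hf.expect_roundedDensity_mul hS (g := fun _ ↦ 1) fun _ _ _ ↦ rfl

lemma expect_roundedDensity_mul_insert (hS : S.card < K) {g : (ι → α) → ℝ}
    (hg : DependsOn g (insert i S : Finset ι)) :
    𝔼 x, roundedDensity f S Finset.univ x * g x = 𝔼 x, f (insert i S) x * g x := by
  by_cases hi : i ∈ S
  · rw [Finset.insert_eq_of_mem hi] at hg ⊢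
    exact hf.expect_roundedDensity_mul hS hg
  · rw [hf.expect_roundedDensity_mul_eq_of_subset (Finset.subset_insert i S)
      (Finset.subset_univ _) hS hg, hf.roundedDensity_insert_self hi hS]

lemma pairError_eq_zero (hS : S.card < K) (hij : {i, j} ⊆ insert l S) :
    pairError f φ S i j = 0 := by
  have hdep := dependsOn_apply_mul_apply φ i j
  rw [pairError, hf.expect_roundedDensity_mul_insert hS (hdep.mono (mod_cast hij)),
    hf.expect_mul_eq_of_subset hij ((Finset.card_insert_le l S).trans hS) hdep, sub_self]

lemma sum_mul_pairError_le (hS : S.card < K) (J : ι → ι → ℝ) :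
    ∑ i, ∑ j, J i j * pairError f φ S i j ≤
      √(∑ p ∈ Finset.univ.offDiag, J p.1 p.2 ^ 2) * √(∑ j, ∑ i, pairError f φ S i j ^ 2) := by
  have hdiag : ∀ i, pairError f φ S i i = 0 := fun i ↦
    hf.pairError_eq_zero hS (l := i) (by simp)
  have hoff : ∑ i, ∑ j, J i j * pairError f φ S i j =
      ∑ p ∈ Finset.univ.offDiag, J p.1 p.2 * pairError f φ S p.1 p.2 := by
    rw [← Finset.sum_product', ← Finset.diag_union_offDiag,
      Finset.sum_union (Finset.disjoint_diag_offDiag _), Finset.sum_diag]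
    simp only [hdiag, mul_zero, Finset.sum_const_zero, zero_add]
  rw [hoff]
  refine (Real.sum_mul_le_sqrt_mul_sqrt _ _ _).trans ?_
  gcongr
  rw [Finset.sum_comm, ← Finset.sum_product']
  exact Finset.sum_le_sum_of_subset_of_nonneg (Finset.subset_univ _) fun _ _ _ ↦ sq_nonneg _

lemma expect_pair_eq_expect_condAvg (hij : i ≠ j) (hi : i ∉ S) (hj : j ∉ S)
    (hS : S.card + 1 < K) :
    𝔼 x, f {i, j} x * (φ (x i) * φ (x j)) =
      𝔼 x, f S x * condAvg f S j (fun y ↦ localMean f φ (insert j S) i y * φ (y j)) x := by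
  have hi' : i ∉ insert j S := by simp [hij, hi]
  have hSj : (insert j S).card < K := by rwa [Finset.card_insert_of_notMem hj]
  have hpair : ({i, j} : Finset ι) ⊆ insert i (insert j S) := by grind
  rw [hf.expect_mul_condAvg hj (by lia),
    ← hf.expect_mul_eq_of_subset hpair ((Finset.card_insert_le i _).trans hSj)
      (dependsOn_apply_mul_apply φ i j), ← hf.expect_mul_condAvg hi' hSj]
  exact Finset.expect_congr rfl fun x _ ↦ by
    rw [condAvg_mul_of_dependsOn (dependsOn_apply φ j) (by simpa using hij), ← localMean]

lemma expect_roundedDensity_pair (hij : i ≠ j) (hi : i ∉ S) (hj : j ∉ S) (hS : S.card < K) :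
    𝔼 x, roundedDensity f S Finset.univ x * (φ (x i) * φ (x j)) =
      𝔼 x, f S x * (localMean f φ S i x * localMean f φ S j x) := by
  have hi' : i ∉ insert j S := by simp [hij, hi]
  have hpair : ({i, j} : Finset ι) ⊆ insert i (insert j S) := by grind
  calc 𝔼 x, roundedDensity f S Finset.univ x * (φ (x i) * φ (x j))
      = 𝔼 x, roundedDensity f S (insert i (insert j S)) x * (φ (x i) * φ (x j)) :=
        hf.expect_roundedDensity_mul_eq_of_subset (by grind) (Finset.subset_univ _) hS
          ((dependsOn_apply_mul_apply φ i j).mono (mod_cast hpair))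
    _ = 𝔼 x, f (insert j S) x * (φ (x j) * localMean f φ S i x) := by
        rw [← expect_siteAvg i]
        refine Finset.expect_congr rfl fun x _ ↦ ?_
        rw [hf.siteAvg_roundedDensity_insert_mul (Finset.subset_insert j S) hi',
          hf.roundedDensity_insert_self hj hS,
          condAvg_mul_of_dependsOn (dependsOn_apply φ j) (by simpa using hij), mul_comm (φ _),
          ← localMean]
    _ = 𝔼 x, f S x * (localMean f φ S i x * localMean f φ S j x) := by
        rw [← hf.expect_mul_condAvg hj hS]
        refine Finset.expect_congr rfl fun x _ ↦ ?_
        rw [condAvg_mul_of_dependsOn (hf.dependsOn_localMean S i) hj, ← localMean,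
          mul_comm (localMean f φ S j x)]

lemma pairError_eq_expect_localCov (hij : i ≠ j) (hi : i ∉ S) (hj : j ∉ S) (hS : S.card + 1 < K) :
    pairError f φ S i j = 𝔼 x, f S x * localCov f φ S i j x := by
  rw [pairError, hf.expect_pair_eq_expect_condAvg hij hi hj hS,
    hf.expect_roundedDensity_pair hij hi hj (by lia), ← Finset.expect_sub_distrib]
  simp only [← mul_sub, localCov]

lemma sq_pairError_le (hij : i ≠ j) (hi : i ∉ S) (hj : j ∉ S) (hS : S.card + 1 < K) :
    pairError f φ S i j ^ 2 ≤ 𝔼 x, f S x * localCov f φ S i j x ^ 2 := by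
  have hS' : S.card ≤ K := by lia
  rw [hf.pairError_eq_expect_localCov hij hi hj hS]
  simpa only [mul_one, one_pow, one_mul, hf.expect_eq_one S hS'] using
    sq_expect_mul_mul_le (hf.nonneg S hS') (fun _ ↦ 1) (localCov f φ S i j)

lemma residualVar_nonneg (hφ : ∀ a, |φ a| ≤ 1) (hS : S.card < K) : 0 ≤ residualVar f φ S :=
  Finset.sum_nonneg fun _ hi ↦ sub_nonneg.2
    (hf.expect_mul_sq_localMean_le_one hφ (Finset.mem_compl.1 hi) hS)

lemma residualVar_le_card (hS : S.card ≤ K) : residualVar f φ S ≤ Fintype.card ι := by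
  calc residualVar f φ S ≤ ∑ _i ∈ Sᶜ, 1 := Finset.sum_le_sum fun i _ ↦ sub_le_self _
        (Finset.expect_nonneg fun x _ ↦ mul_nonneg (hf.nonneg S hS x) (sq_nonneg _))
    _ ≤ Fintype.card ι := by
        rw [Finset.sum_const, nsmul_one]
        exact mod_cast Finset.card_le_univ _

lemma residualVar_insert_add_le (hφ : ∀ a, |φ a| ≤ 1) (hj : j ∉ S) (hS : S.card + 1 < K) :
    residualVar f φ (insert j S) + ∑ i ∈ (insert j S)ᶜ, 𝔼 x, f S x * localCov f φ S i j x ^ 2 ≤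
      residualVar f φ S := by
  have hS' : S.card < K := by lia
  rw [residualVar, ← Finset.sum_add_distrib]
  calc ∑ i ∈ (insert j S)ᶜ, (1 - 𝔼 x, f (insert j S) x * localMean f φ (insert j S) i x ^ 2 +
        𝔼 x, f S x * localCov f φ S i j x ^ 2)
      ≤ ∑ i ∈ (insert j S)ᶜ, (1 - 𝔼 x, f S x * localMean f φ S i x ^ 2) := by
        refine Finset.sum_le_sum fun i hi ↦ ?_
        obtain ⟨hij, hi⟩ : i ≠ j ∧ i ∉ S := by simpa using hi
        linarith [hf.expect_sq_localMean_add_sq_localCov_le hφ hij hi hj hS]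
    _ ≤ residualVar f φ S :=
        Finset.sum_le_sum_of_subset_of_nonneg
          (Finset.compl_subset_compl.2 (Finset.subset_insert j S)) fun i hi _ ↦ sub_nonneg.2
          (hf.expect_mul_sq_localMean_le_one hφ (Finset.mem_compl.1 hi) hS')

lemma sum_sq_pairError_le (hS : S.card + 1 < K) :
    ∑ j, ∑ i, pairError f φ S i j ^ 2 ≤
      ∑ j ∈ Sᶜ, ∑ i ∈ (insert j S)ᶜ, 𝔼 x, f S x * localCov f φ S i j x ^ 2 := by
  have hS' : S.card < K := by lia
  have hzero : ∀ {i j l}, {i, j} ⊆ insert l S → pairError f φ S i j ^ 2 = 0 := fun h ↦ by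
    rw [hf.pairError_eq_zero hS' h, zero_pow two_ne_zero]
  rw [← Finset.sum_subset (Finset.subset_univ Sᶜ) fun j _ hj ↦
    Finset.sum_eq_zero fun i _ ↦ hzero (l := i) (by grind [Finset.mem_compl])]
  refine Finset.sum_le_sum fun j hj ↦ ?_
  rw [← Finset.sum_subset (Finset.subset_univ (insert j S)ᶜ) fun i _ hi ↦
    hzero (l := j) (by grind [Finset.mem_compl])]
  refine Finset.sum_le_sum fun i hi ↦ ?_
  obtain ⟨hij, hi⟩ : i ≠ j ∧ i ∉ S := by simpa using hi
  exact hf.sq_pairError_le hij hi (Finset.mem_compl.1 hj) hS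

lemma expect_mul_log_roundedDensity {q : (ι → α) → ℝ}
    (hq : ∀ x, q x ≠ 0 → roundedDensity f S Finset.univ x ≠ 0)
    (hqS : ∀ g : (ι → α) → ℝ, DependsOn g S → 𝔼 x, q x * g x = 𝔼 x, f S x * g x)
    (hqi : ∀ i ∉ S, ∀ g : (ι → α) → ℝ, DependsOn g (insert i S : Finset ι) →
      𝔼 x, q x * g x = 𝔼 x, f (insert i S) x * g x) :
    𝔼 x, q x * Real.log (roundedDensity f S Finset.univ x) = meanFieldNegEntropy f S := by
  calc 𝔼 x, q x * Real.log (roundedDensity f S Finset.univ x)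
      = 𝔼 x, (q x * Real.log (f S x) +
          ∑ i ∈ Sᶜ, q x * Real.log (f (insert i S) x / f S x)) := by
        refine Finset.expect_congr rfl fun x _ ↦ ?_
        by_cases hx : q x = 0
        · simp only [hx, zero_mul, Finset.sum_const_zero, add_zero]
        · rw [log_roundedDensity (hq x hx), mul_add, Finset.mul_sum]
    _ = 𝔼 x, q x * Real.log (f S x) +
          ∑ i ∈ Sᶜ, 𝔼 x, q x * Real.log (f (insert i S) x / f S x) := by
        rw [Finset.expect_add_distrib, Finset.expect_sum_comm]
    _ = meanFieldNegEntropy f S := by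
        rw [meanFieldNegEntropy, hqS _ fun x y hxy ↦ by rw [hf.dependsOn S hxy]]
        refine congrArg _ (Finset.sum_congr rfl fun i hi ↦
          hqi i (Finset.mem_compl.1 hi) _ fun x y hxy ↦ ?_)
        rw [hf.dependsOn _ hxy, hf.dependsOn S fun l hl ↦ hxy l (by simp [hl])]

end

theorem exists_card_le_sum_sq_pairError_le {k : ℕ} (hf : IsConsistentDensity (k + 2) f)
    (hφ : ∀ a, |φ a| ≤ 1) :
    ∃ S : Finset ι, S.card ≤ k ∧
      ∑ j, ∑ i, pairError f φ S i j ^ 2 ≤ (Fintype.card ι : ℝ) ^ 2 / (k + 1) := by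
  obtain ⟨S, hS, hgain⟩ := exists_card_le_sum_gain_le (k := k)
    (fun S hS ↦ hf.residualVar_nonneg hφ (Nat.lt_succ_of_le hS))
    (fun S j hj hS ↦ hf.residualVar_insert_add_le hφ hj (by lia))
  refine ⟨S, hS, (hf.sum_sq_pairError_le (by lia)).trans (hgain.trans ?_)⟩
  rw [sq, mul_div_assoc]
  gcongr
  exact hf.residualVar_le_card (by simp)

end IsConsistentDensity

end Rounding

section Restriction

variable {ι α : Type*} {S : Finset ι}

lemma exists_eq_comp_restrict_of_dependsOn {g : (ι → α) → ℝ} (hg : DependsOn g S) :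
    ∃ g' : (S → α) → ℝ, ∀ x, g x = g' (S.restrict x) :=
  (dependsOn_iff_exists_comp.1 hg).imp fun _ ↦ congrFun

lemma expect_comp_restrict [DecidableEq ι] [Fintype ι] [Fintype α] [Nonempty α] (g : (S → α) → ℝ) :
    𝔼 x : ι → α, g (S.restrict x) = 𝔼 y, g y := by
  rw [Fintype.expect_equiv (Equiv.piEquivPiSubtypeProd (· ∈ S) fun _ ↦ α)
    (fun x ↦ g (S.restrict x)) (fun p ↦ g p.1) fun _ ↦ rfl, ← Finset.univ_product_univ,
    Finset.expect_product' _ _ fun y _ ↦ g y]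
  simp only [Fintype.expect_const]

end Restriction

section SpinCube

open Function

variable {n k : ℕ} {S T : Finset (Fin n)} {i : Fin n}

instance : Nonempty ↥B := ⟨⟨1, by simp⟩⟩

lemma card_spin : Fintype.card ↥B = 2 := by
  rw [Fintype.card_coe, Finset.card_pair (by norm_num)]

lemma abs_spin_le_one (a : ↥B) : |(a : ℝ)| ≤ 1 := by
  rcases Finset.mem_insert.1 a.2 with h | h
  · simp [h]
  · simp [Finset.mem_singleton.1 h]

lemma expect_two_pow_mul_comp_restrict (g : Asg S → ℝ) :
    𝔼 x : Cube n, 2 ^ S.card * g (S.restrict x) = ∑ y, g y := by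
  rw [← Finset.mul_expect, expect_comp_restrict, Fintype.expect_eq_sum_div_card, Fintype.card_fun,
    card_spin, Fintype.card_coe]
  push_cast
  exact mul_div_cancel₀ _ (by positivity)

lemma extAsg_restrict (i : Fin n) (x : Cube n) (a : ↥B) :
    extAsg i (S.restrict x) a = (insert i S).restrict (update x i a) := by
  ext j
  by_cases hj : j.1 = i <;> simp [extAsg, hj]

lemma extAsg_res (i : Fin n) (y : Asg (insert i S)) :
    extAsg i (res (Finset.subset_insert i S) y) (y ⟨i, Finset.mem_insert_self i S⟩) = y := by
  ext ⟨j, hj⟩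
  by_cases hji : j = i
  · subst hji
    simp [extAsg]
  · simp [extAsg, res, hji]

lemma res_extAsg (hi : i ∉ S) (z : Asg S) (a : ↥B) :
    res (Finset.subset_insert i S) (extAsg i z a) = z := by
  ext j
  have hji : j.1 ≠ i := ne_of_mem_of_not_mem j.2 hi
  simp [res, extAsg, hji]

lemma margTo_self (μ : Asg S → ℝ) : margTo μ subset_rfl = μ :=
  funext fun z ↦ Fintype.sum_ite_eq' z μ

lemma margTo_subset_insert (hi : i ∉ S) (μ : Asg (insert i S) → ℝ) (z : Asg S) :
    margTo μ (Finset.subset_insert i S) z = ∑ a, μ (extAsg i z a) := by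
  rw [margTo, ← Finset.sum_filter]
  refine Finset.sum_nbij' (fun y ↦ y ⟨i, Finset.mem_insert_self i S⟩) (extAsg i z)
    (fun _ _ ↦ Finset.mem_univ _) (fun a _ ↦ ?_) (fun y hy ↦ ?_) (fun a _ ↦ ?_) (fun y hy ↦ ?_)
  · exact (Finset.mem_filter_univ _).2 (res_extAsg hi z a)
  · rw [← (Finset.mem_filter_univ _).1 hy, extAsg_res]
  · simp [extAsg]
  · rw [← (Finset.mem_filter_univ _).1 hy, extAsg_res]

namespace SAFamily

variable (F : SAFamily n k)

/-- The density, relative to the uniform measure on the cube, of the local distribution `F.μ S`,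
seen as a function of all coordinates. -/
def density (S : Finset (Fin n)) (x : Cube n) : ℝ := 2 ^ S.card * F.μ S (S.restrict x)

lemma expect_density_mul_comp_restrict (S : Finset (Fin n)) (g : Asg S → ℝ) :
    𝔼 x, F.density S x * g (S.restrict x) = ∑ y, F.μ S y * g y := by
  simp only [density, mul_assoc, expect_two_pow_mul_comp_restrict fun y ↦ F.μ S y * g y]

lemma margTo_of_subset (hTS : T ⊆ S) (hS : S.card ≤ k) : margTo (F.μ S) hTS = F.μ T := by
  have hinter : ∀ R (hRS : R ⊆ S) (hRT : R ⊆ T), R = T →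
      margTo (F.μ S) hRS = margTo (F.μ T) hRT → margTo (F.μ S) hTS = F.μ T := by
    rintro R _ _ rfl h
    rw [h, margTo_self]
  exact hinter (S ∩ T) _ _ (Finset.inter_eq_right.2 hTS)
    (funext (F.consistent S T (by rwa [Finset.union_eq_left.2 hTS])))

lemma sum_μ_extAsg (hi : i ∉ S) (hS : S.card < k) (y : Asg S) :
    ∑ a, F.μ (insert i S) (extAsg i y a) = F.μ S y := by
  rw [← margTo_subset_insert hi, F.margTo_of_subset _ ((Finset.card_insert_le i S).trans hS)]

lemma density_update_insert (hi : i ∉ S) (x : Cube n) (a : ↥B) :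
    F.density (insert i S) (update x i a) =
      2 * 2 ^ S.card * F.μ (insert i S) (extAsg i (S.restrict x) a) := by
  rw [density, Finset.card_insert_of_notMem hi, extAsg_restrict, pow_succ']

lemma isConsistentDensity_density : IsConsistentDensity k F.density where
  nonneg S hS x := mul_nonneg (by positivity) (F.nonneg S hS _)
  expect_eq_one S hS := (expect_two_pow_mul_comp_restrict (F.μ S)).trans (F.sum_one S hS)
  dependsOn S x y hxy := by rw [density, density, S.dependsOn_restrict hxy]
  siteAvg_insert S i hi hS := by
    ext x
    simp only [siteAvg, F.density_update_insert hi]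
    rw [← Finset.mul_expect, Fintype.expect_eq_sum_div_card, F.sum_μ_extAsg hi hS, card_spin,
      density]
    push_cast
    ring

lemma pairExp_eq_expect (i j : Fin n) :
    pairExp F i j = 𝔼 x : Cube n, F.density {i, j} x * ((x i : ℝ) * x j) := by
  simp only [pairExp, mul_assoc]
  exact (F.expect_density_mul_comp_restrict {i, j} fun y ↦
    (y ⟨i, by simp⟩ : ℝ) * (y ⟨j, by simp⟩ : ℝ)).symm

end SAFamily

end SpinCube

section Entropy

open Function

lemma ent_eq_log_card_sub_expect {D : Type*} [Fintype D] {p : D → ℝ} (hp : ∑ d, p d = 1) :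
    ent p = Real.log (Fintype.card D) -
      𝔼 d, Fintype.card D * p d * Real.log (Fintype.card D * p d) := by
  have : Nonempty D := by
    by_contra! h
    simp at hp
  have hD : (Fintype.card D : ℝ) ≠ 0 := mod_cast Fintype.card_ne_zero
  have hlog : ∀ d, p d * Real.log (Fintype.card D * p d) =
      p d * Real.log (Fintype.card D) + p d * Real.log (p d) := by
    intro d
    by_cases hd : p d = 0
    · simp only [hd, zero_mul, add_zero]
    · rw [Real.log_mul hD hd, mul_add]
  simp only [mul_assoc]
  rw [← Finset.mul_expect, Fintype.expect_eq_sum_div_card, mul_div_cancel₀ _ hD]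
  simp only [hlog, Finset.sum_add_distrib]
  rw [← Finset.sum_mul, hp, ent]
  ring

namespace SAFamily

variable {n k : ℕ} {S : Finset (Fin n)} {i : Fin n} (F : SAFamily n k)

lemma ent_eq_card_mul_log_two_sub_expect (hS : S.card ≤ k) :
    ent (F.μ S) = S.card * Real.log 2 - 𝔼 x, F.density S x * Real.log (F.density S x) := by
  have hcard : (Fintype.card (Asg S) : ℝ) = 2 ^ S.card := by
    rw [Fintype.card_fun, card_spin, Fintype.card_coe]
    push_cast
    rfl
  rw [ent_eq_log_card_sub_expect (F.sum_one S hS), hcard, Real.log_pow, ← expect_comp_restrict]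
  rfl

lemma density_mul_ent_cond (hi : i ∉ S) (hS : S.card < k) (x : Cube n) :
    F.density S x *
        ent (fun a ↦ F.μ (insert i S) (extAsg i (S.restrict x) a) / F.μ S (S.restrict x)) =
      F.density S x * Real.log 2 - F.density S x *
        condAvg F.density S i (fun y ↦ Real.log (F.density (insert i S) y / F.density S y)) x := by
  by_cases hx : F.density S x = 0
  · simp only [hx, zero_mul, sub_zero]
  have hμ : F.μ S (S.restrict x) ≠ 0 := right_ne_zero_of_mul hx
  have hweight : ∀ a, 2 * (F.μ (insert i S) (extAsg i (S.restrict x) a) / F.μ S (S.restrict x)) =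
      F.density (insert i S) (update x i a) / F.density S x := fun a ↦ by
    rw [F.density_update_insert hi, density]
    field_simp
  rw [ent_eq_log_card_sub_expect (by rw [← Finset.sum_div, F.sum_μ_extAsg hi hS, div_self hμ]),
    card_spin, mul_sub, condAvg]
  simp only [Nat.cast_ofNat, hweight,
    apply_update_of_dependsOn (F.isConsistentDensity_density.dependsOn S) (Finset.mem_coe.not.2 hi)]

lemma condEnt_eq_log_two_sub_expect (hi : i ∉ S) (hS : S.card < k) :
    condEnt F S i = Real.log 2 - 𝔼 x, F.density (insert i S) x *
      Real.log (F.density (insert i S) x / F.density S x) := by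
  rw [condEnt, ← F.expect_density_mul_comp_restrict]
  simp only [F.density_mul_ent_cond hi hS]
  rw [Finset.expect_sub_distrib, ← Finset.expect_mul,
    F.isConsistentDensity_density.expect_eq_one S hS.le, one_mul,
    F.isConsistentDensity_density.expect_mul_condAvg hi hS]

lemma ent_add_sum_condEnt_eq (hS : S.card < k) :
    ent (F.μ S) + ∑ i ∈ Sᶜ, condEnt F S i =
      n * Real.log 2 - meanFieldNegEntropy F.density S := by
  have hcard : (S.card : ℝ) + Sᶜ.card = n :=
    mod_cast S.card_add_card_compl.trans (Fintype.card_fin n)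
  rw [F.ent_eq_card_mul_log_two_sub_expect hS.le,
    Finset.sum_congr rfl fun i hi ↦ F.condEnt_eq_log_two_sub_expect (Finset.mem_compl.1 hi) hS,
    Finset.sum_sub_distrib, Finset.sum_const, nsmul_eq_mul, meanFieldNegEntropy, ← hcard]
  ring

end SAFamily

end Entropy

section Ising

variable {n k : ℕ}

/-- The energy of a configuration `x` in the Ising model `J`, so that the partition function `Z` is
the sum of `exp (isingEnergy J x)`. -/
def isingEnergy (J : Fin n → Fin n → ℝ) (x : Cube n) : ℝ :=
  ∑ i : Fin n, ∑ j : Fin n, J i j * (x i : ℝ) * (x j : ℝ)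

lemma expect_mul_isingEnergy (J : Fin n → Fin n → ℝ) (q : Cube n → ℝ) :
    𝔼 x, q x * isingEnergy J x = ∑ i, ∑ j, J i j * 𝔼 x, q x * ((x i : ℝ) * x j) := by
  simp only [isingEnergy, Finset.mul_sum, Finset.mul_expect, Finset.expect_sum_comm]
  exact Finset.sum_congr rfl fun i _ ↦ Finset.sum_congr rfl fun j _ ↦
    Finset.expect_congr rfl fun x _ ↦ by ring

lemma log_sum_eq_add_log_expect {g : Cube n → ℝ} (hg : 0 < 𝔼 x, g x) :
    Real.log (∑ x, g x) = n * Real.log 2 + Real.log (𝔼 x, g x) := by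
  have hcard : (Fintype.card (Cube n) : ℝ) = 2 ^ n := by
    rw [Fintype.card_fun, card_spin, Fintype.card_fin]
    push_cast
    rfl
  rw [← Fintype.card_mul_expect, hcard, Real.log_mul (by positivity) hg.ne', Real.log_pow]

lemma margTo_expect_ite {R S : Finset (Fin n)} (h : R ⊆ S) (q : Cube n → ℝ) (z : Asg R) :
    margTo (fun y ↦ 𝔼 x, if S.restrict x = y then q x else 0) h z =
      𝔼 x, if R.restrict x = z then q x else 0 := by
  simp only [margTo, ← Finset.sum_filter]
  rw [← Finset.expect_sum_comm]
  refine Finset.expect_congr rfl fun x _ ↦ ?_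
  rw [Finset.sum_ite_eq]
  simp only [Finset.mem_filter_univ]
  rfl

namespace SAFamily

/-- The objective of the Sherali–Adams relaxation: the energy plus the level-`k'` pseudo-entropy. -/
def freeEnergy (F : SAFamily n k) (J : Fin n → Fin n → ℝ) (k' : ℕ) : ℝ :=
  (∑ i : Fin n, ∑ j : Fin n, J i j * pairExp F i j) + pseudoEnt F k'

lemma pseudoEnt_le_sub_meanFieldNegEntropy (F : SAFamily n k) {S : Finset (Fin n)} {k' : ℕ}
    (hS : S.card ≤ k') (hk : k' < k) :
    pseudoEnt F k' ≤ n * Real.log 2 - meanFieldNegEntropy F.density S := by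
  rw [← F.ent_add_sum_condEnt_eq (hS.trans_lt hk)]
  exact Finset.inf'_le (fun S ↦ ent (F.μ S) + ∑ i ∈ Sᶜ, condEnt F S i)
    (Finset.mem_filter.2 ⟨Finset.mem_univ S, hS⟩)

theorem freeEnergy_le_log_sum_exp_add (F : SAFamily n (k + 2)) (J : Fin n → Fin n → ℝ) :
    F.freeEnergy J k ≤ Real.log (∑ x, Real.exp (isingEnergy J x)) +
      √(∑ p ∈ Finset.univ.offDiag, J p.1 p.2 ^ 2) * (n / √(k + 1)) := by
  have hf := F.isConsistentDensity_density
  obtain ⟨S, hSk, hS⟩ := hf.exists_card_le_sum_sq_pairError_le abs_spin_le_one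
  have hSK : S.card < k + 2 := by lia
  set r := roundedDensity F.density S Finset.univ with hr
  have hentropy : 𝔼 x, r x * Real.log (r x) = meanFieldNegEntropy F.density S :=
    hf.expect_mul_log_roundedDensity (fun _ ↦ id) (fun _ ↦ hf.expect_roundedDensity_mul hSK)
      fun _ _ _ ↦ hf.expect_roundedDensity_mul_insert hSK
  have hvariational := expect_mul_sub_expect_mul_log_le_log_expect_exp (isingEnergy J)
    (hf.roundedDensity_nonneg hSK _) (hf.expect_roundedDensity hSK)
  have henergy : ∑ i, ∑ j, J i j * pairExp F i j - 𝔼 x, r x * isingEnergy J x =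
      ∑ i, ∑ j, J i j * pairError F.density (fun a : ↥B ↦ (a : ℝ)) S i j := by
    simp only [expect_mul_isingEnergy, ← Finset.sum_sub_distrib, ← mul_sub, pairError,
      F.pairExp_eq_expect, hr]
  have herror := (hf.sum_mul_pairError_le (φ := fun a : ↥B ↦ (a : ℝ)) hSK J).trans
    (mul_le_mul_of_nonneg_left (Real.sqrt_le_sqrt hS) (Real.sqrt_nonneg _))
  have hpseudo := F.pseudoEnt_le_sub_meanFieldNegEntropy hSk (by lia : k < k + 2)
  rw [Fintype.card_fin, Real.sqrt_div (sq_nonneg _), Real.sqrt_sq n.cast_nonneg] at herror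
  rw [log_sum_eq_add_log_expect (expect_exp_pos _), freeEnergy]
  rw [← hr, hentropy] at hvariational
  linarith

/-- The family of marginals of the distribution on the cube with density `q`. -/
def ofDensity (k : ℕ) (q : Cube n → ℝ) (hq : ∀ x, 0 ≤ q x) (hq1 : 𝔼 x, q x = 1) :
    SAFamily n k where
  μ S y := 𝔼 x, if S.restrict x = y then q x else 0
  nonneg S _ y := Finset.expect_nonneg fun x _ ↦ by split_ifs <;> simp only [hq, le_refl]
  sum_one S _ := by simp only [← Finset.expect_sum_comm, Fintype.sum_ite_eq, hq1]
  consistent S T _ z := by rw [margTo_expect_ite, margTo_expect_ite]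

section OfDensity

variable {q : Cube n → ℝ} (hq : ∀ x, 0 ≤ q x) (hq1 : 𝔼 x, q x = 1)

lemma expect_density_ofDensity_mul {S : Finset (Fin n)} {g : Cube n → ℝ} (hg : DependsOn g S) :
    𝔼 x, (ofDensity k q hq hq1).density S x * g x = 𝔼 x, q x * g x := by
  obtain ⟨g', hg'⟩ := exists_eq_comp_restrict_of_dependsOn hg
  simp only [hg']
  rw [expect_density_mul_comp_restrict]
  simp only [ofDensity, Finset.expect_mul, ite_mul, zero_mul]
  rw [← Finset.expect_sum_comm]
  simp only [Fintype.sum_ite_eq]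

lemma density_ofDensity_ne_zero (S : Finset (Fin n)) {x : Cube n} (hx : q x ≠ 0) :
    (ofDensity k q hq hq1).density S x ≠ 0 := by
  refine mul_ne_zero (by positivity) fun h ↦ hx ?_
  have hzero := (Fintype.expect_eq_zero_iff_of_nonneg fun y ↦ by
    split_ifs <;> simp only [Pi.zero_apply, hq, le_refl]).1 h
  simpa only [if_true, Pi.zero_apply] using congrFun hzero x

lemma meanFieldNegEntropy_ofDensity_le {S : Finset (Fin n)} (hS : S.card < k) :
    meanFieldNegEntropy (ofDensity k q hq hq1).density S ≤ 𝔼 x, q x * Real.log (q x) := by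
  have hf := (ofDensity k q hq hq1).isConsistentDensity_density
  have hne : ∀ x, q x ≠ 0 →
      roundedDensity (ofDensity k q hq hq1).density S Finset.univ x ≠ 0 := fun x hx ↦
    mul_ne_zero (density_ofDensity_ne_zero hq hq1 S hx) (Finset.prod_ne_zero_iff.2 fun i _ ↦
      div_ne_zero (density_ofDensity_ne_zero hq hq1 _ hx) (density_ofDensity_ne_zero hq hq1 S hx))
  rw [← hf.expect_mul_log_roundedDensity hne
    (fun _ hg ↦ (expect_density_ofDensity_mul hq hq1 hg).symm)
    fun _ _ _ hg ↦ (expect_density_ofDensity_mul hq hq1 hg).symm]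
  exact expect_mul_log_le_expect_mul_log hq (hf.roundedDensity_nonneg hS _) hne
    ((hf.expect_roundedDensity hS).trans hq1.symm)

lemma le_freeEnergy_ofDensity (J : Fin n → Fin n → ℝ) {k' : ℕ} (hk : k' < k) :
    n * Real.log 2 + (𝔼 x, q x * isingEnergy J x - 𝔼 x, q x * Real.log (q x)) ≤
      (ofDensity k q hq hq1).freeEnergy J k' := by
  have hentropy : n * Real.log 2 - 𝔼 x, q x * Real.log (q x) ≤
      pseudoEnt (ofDensity k q hq hq1) k' := by
    refine Finset.le_inf' _ _ fun S hS ↦ ?_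
    have hSk : S.card < k := (Finset.mem_filter.1 hS).2.trans_lt hk
    rw [ent_add_sum_condEnt_eq _ hSk]
    exact sub_le_sub_left (meanFieldNegEntropy_ofDensity_le hq hq1 hSk) _
  have henergy : ∑ i, ∑ j, J i j * pairExp (ofDensity k q hq hq1) i j =
      𝔼 x, q x * isingEnergy J x := by
    rw [expect_mul_isingEnergy]
    refine Finset.sum_congr rfl fun i _ ↦ Finset.sum_congr rfl fun j _ ↦ ?_
    rw [pairExp_eq_expect, expect_density_ofDensity_mul hq hq1
      (dependsOn_apply_mul_apply (fun a : ↥B ↦ (a : ℝ)) i j)]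
  rw [freeEnergy, henergy]
  linarith

theorem exists_log_sum_exp_le_freeEnergy (J : Fin n → Fin n → ℝ) {k' : ℕ} (hk : k' < k) :
    ∃ F : SAFamily n k, Real.log (∑ x, Real.exp (isingEnergy J x)) ≤ F.freeEnergy J k' := by
  have hgibbs := expect_mul_log_gibbsDensity (isingEnergy J) (expect_gibbsDensity (isingEnergy J))
  have h := le_freeEnergy_ofDensity (fun x ↦ (gibbsDensity_pos (isingEnergy J) x).le)
    (expect_gibbsDensity _) J hk
  refine ⟨_, le_trans ?_ h⟩
  rw [log_sum_eq_add_log_expect (expect_exp_pos _), hgibbs, sub_sub_cancel]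

end OfDensity

end SAFamily

end Ising

section Dense

lemma JT_nonneg {n : ℕ} (J : Fin n → Fin n → ℝ) : 0 ≤ JT J :=
  Finset.sum_nonneg fun _ _ ↦ Finset.sum_nonneg fun _ _ ↦ abs_nonneg _

lemma sum_offDiag_sq_le_of_dense {n : ℕ} {J : Fin n → Fin n → ℝ} {Δ : ℝ} (hΔ : 0 < Δ)
    (hdense : ∀ i j : Fin n, i ≠ j → Δ * |J i j| ≤ JT J / (n : ℝ) ^ 2) :
    ∑ p ∈ Finset.univ.offDiag, J p.1 p.2 ^ 2 ≤ JT J ^ 2 / (n ^ 2 * Δ) := by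
  have hentry : ∀ p ∈ Finset.univ.offDiag, J p.1 p.2 ^ 2 ≤ JT J / (n ^ 2 * Δ) * |J p.1 p.2| := by
    intro p hp
    rw [← sq_abs, sq]
    refine mul_le_mul_of_nonneg_right ?_ (abs_nonneg _)
    rw [← div_div, le_div_iff₀ hΔ, mul_comm]
    exact hdense _ _ (Finset.mem_offDiag.1 hp).2.2
  have hJT : ∑ p ∈ Finset.univ.offDiag, |J p.1 p.2| ≤ JT J := by
    rw [JT, ← Finset.sum_product']
    exact Finset.sum_le_sum_of_subset_of_nonneg (Finset.subset_univ _) fun _ _ _ ↦ abs_nonneg _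
  calc ∑ p ∈ Finset.univ.offDiag, J p.1 p.2 ^ 2
      ≤ JT J / (n ^ 2 * Δ) * ∑ p ∈ Finset.univ.offDiag, |J p.1 p.2| := by
        rw [Finset.mul_sum]
        exact Finset.sum_le_sum hentry
    _ ≤ JT J / (n ^ 2 * Δ) * JT J := by
        gcongr
        exact div_nonneg (JT_nonneg J) (by positivity)
    _ = JT J ^ 2 / (n ^ 2 * Δ) := by ring

lemma sqrt_sum_offDiag_sq_mul_le_of_dense {n k : ℕ} {J : Fin n → Fin n → ℝ} {Δ ε : ℝ} (hΔ : 0 < Δ)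
    (hε : 0 < ε) (hdense : ∀ i j : Fin n, i ≠ j → Δ * |J i j| ≤ JT J / (n : ℝ) ^ 2)
    (hk : 1 / (Δ * ε ^ 2) ≤ k) :
    √(∑ p ∈ Finset.univ.offDiag, J p.1 p.2 ^ 2) * (n / √(k + 1)) ≤ ε * JT J := by
  rw [← Real.sqrt_sq (n.cast_nonneg : (0 : ℝ) ≤ n), ← Real.sqrt_div (sq_nonneg _),
    ← Real.sqrt_mul' _ (by positivity)]
  refine Real.sqrt_le_iff.2 ⟨mul_nonneg hε.le (JT_nonneg J), ?_⟩
  have hk' : 1 / Δ / (k + 1) ≤ ε ^ 2 := by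
    have hεΔ : 0 < Δ * ε ^ 2 := by positivity
    rw [div_le_iff₀ hεΔ] at hk
    rw [div_div, div_le_iff₀ (by positivity)]
    linarith
  calc (∑ p ∈ Finset.univ.offDiag, J p.1 p.2 ^ 2) * ((n : ℝ) ^ 2 / (k + 1))
      ≤ JT J ^ 2 / (n ^ 2 * Δ) * ((n : ℝ) ^ 2 / (k + 1)) := by
        gcongr
        exact sum_offDiag_sq_le_of_dense hΔ hdense
    _ = (n : ℝ) ^ 2 / n ^ 2 * (1 / Δ / (k + 1) * JT J ^ 2) := by
        ring
    _ ≤ 1 * (ε ^ 2 * JT J ^ 2) := by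
        gcongr
        exact div_self_le_one _
    _ = (ε * JT J) ^ 2 := by ring

end Dense

theorem dense_ising_SA_approximation_general {n : ℕ} (J : Fin n → Fin n → ℝ) (k : ℕ) :
    Real.log (∑ x, Real.exp (isingEnergy J x)) ≤
        sSup {v : ℝ | ∃ F : SAFamily n (k + 2), v = F.freeEnergy J k} ∧
      sSup {v : ℝ | ∃ F : SAFamily n (k + 2), v = F.freeEnergy J k} ≤
        Real.log (∑ x, Real.exp (isingEnergy J x)) +
          √(∑ p ∈ Finset.univ.offDiag, J p.1 p.2 ^ 2) * (n / √(k + 1)) := by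
  obtain ⟨F, hF⟩ := SAFamily.exists_log_sum_exp_le_freeEnergy J (by lia : k < k + 2)
  have hupper : ∀ v ∈ {v : ℝ | ∃ F : SAFamily n (k + 2), v = F.freeEnergy J k},
      v ≤ Real.log (∑ x, Real.exp (isingEnergy J x)) +
        √(∑ p ∈ Finset.univ.offDiag, J p.1 p.2 ^ 2) * (n / √(k + 1)) := by
    rintro _ ⟨F, rfl⟩
    exact F.freeEnergy_le_log_sum_exp_add J
  exact ⟨hF.trans (le_csSup ⟨_, hupper⟩ ⟨F, rfl⟩), csSup_le ⟨_, F, rfl⟩ hupper⟩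

/-- Main theorem, dense case: there is a universal constant `C > 0` such that for
any `Δ`-dense Ising model and `ε ∈ (0,1)`, taking `k = ⌈C/(Δε²)⌉`, the value `V`
of the level-`(k+2)` Sherali–Adams relaxation with the augmented mean-field
pseudo-entropy (at level `k`) satisfies `log Z ≤ V ≤ log Z + ε J_T`. -/
theorem dense_ising_SA_approximation :
    ∃ C : ℝ, 0 < C ∧
      ∀ n : ℕ, 1 ≤ n → ∀ Δ ε : ℝ, Δ ∈ Set.Ioc (0 : ℝ) 1 → ε ∈ Set.Ioo (0 : ℝ) 1 →
        ∀ J : Fin n → Fin n → ℝ,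
          (∀ i j : Fin n, i ≠ j → Δ * |J i j| ≤ JT J / (n : ℝ) ^ 2) →
          ∀ Z : ℝ, Z = ∑ x : Cube n,
              Real.exp (∑ i : Fin n, ∑ j : Fin n, J i j * (x i : ℝ) * (x j : ℝ)) →
          ∀ k : ℕ, k = ⌈C / (Δ * ε ^ 2)⌉₊ →
          ∀ V : ℝ, V = sSup {v : ℝ | ∃ F : SAFamily n (k + 2),
              v = (∑ i : Fin n, ∑ j : Fin n, J i j * pairExp F i j) + pseudoEnt F k} →
          Real.log Z ≤ V ∧ V ≤ Real.log Z + ε * JT J := by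
  refine ⟨1, one_pos, fun n _ Δ ε hΔ hε J hdense Z hZ k hk V hV ↦ ?_⟩
  subst hZ hV
  obtain ⟨hlower, hupper⟩ := dense_ising_SA_approximation_general J k
  have herror := sqrt_sum_offDiag_sq_mul_le_of_dense hΔ.1 hε.1 hdense (hk ▸ Nat.le_ceil _)
  exact ⟨hlower, hupper.trans (add_le_add_right herror _)⟩
end
end

section
/- (Correlation rounding on low threshold rank models.) There exists a universal constant c > 0 such that the following holds. Let n ≥ 1, ε ∈ (0,1), let J : Fin n → Fin n → ℝ be symmetric and regular with Σ_j |J i j| = J' > 0 for every i, and let A be the matrix A i j = |J i j|/J'. Let rank(τ) denote the number of eigenvalues of A (with multiplicity) that are ≥ τ, and set t = ⌈rank(c·ε²)/(c·ε²)⌉. Let (μ_S, v_{S,α}) be a level-(t+2) Lasserre solution on Fin n. Then there exists S ⊆ Fin n with |S| ≤ t such that | Σ_{i,j} J i j · Σ_{x_S} μ_S(x_S) · ( E[x i · x j | x_S] − E[x i | x_S]·E[x j | x_S] ) | ≤ ε·n·J', where the conditional expectations are computed from μ_{S∪{i,j}}, μ_{S∪{i}}, μ_{S∪{j}} (terms with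 μ_S(x_S) = 0 contribute 0). -/
open scoped BigOperators

noncomputable section

open scoped RealInnerProductSpace

/-- A level-`k` Lasserre solution on `Fin n`: a level-`k` Sherali–Adams
consistent family together with vectors `v_{S,α}` in a finite-dimensional real
inner product space whose inner products realize the joint local probabilities:
`⟪v_{S,α}, v_{T,β}⟫ = Pr_{μ_{S∪T}}[x_S = α ∧ x_T = β]` whenever `|S ∪ T| ≤ k`. -/
structure LasserreSol (n k : ℕ) extends SAFamily n k where
  dim : ℕ
  vec : (S : Finset (Fin n)) → Asg S → EuclideanSpace ℝ (Fin dim)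
  inner_eq : ∀ S T : Finset (Fin n), (S ∪ T).card ≤ k →
    ∀ (α : Asg S) (β : Asg T),
      ⟪vec S α, vec T β⟫ = ∑ y : Asg (S ∪ T),
        if res Finset.subset_union_left y = α ∧ res Finset.subset_union_right y = β
        then toSAFamily.μ (S ∪ T) y else 0

/-- The `τ`-threshold rank of a Hermitian (real symmetric) matrix `A`: the number
of eigenvalues of `A`, counted with multiplicity, that are at least `τ`. -/
def thresholdRank {n : ℕ} {A : Matrix (Fin n) (Fin n) ℝ} (hA : A.IsHermitian)
    (τ : ℝ) : ℕ :=
  (Finset.univ.filter (fun i : Fin n => τ ≤ hA.eigenvalues i)).card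

/-!
The covariance matrix `C` given `x_S` is the Gram matrix of the spin vectors projected orthogonally
to the span of the `v_{S,α}`. Adding `j` to `S` enlarges that span by the spin vector of `j`, which
lowers every `C i i` by at least `C i j ^ 2`. Since `0 ≤ ∑ C i i ≤ n`, a greedy choice of `t` seeds
meets a set `S` with `t * ∑ C i j ^ 2 ≤ n ^ 2`: conditionally on `x_S`, a typical pair is almost
uncorrelated.

To pass from typical pairs to the edges of `A`, take weights `w ≥ 1` and let `M` be the matrix with
entries `C i j ^ 2 / (w i * w j)`, positive semidefinite by the Schur product theorem. By
Cauchy–Schwarz `(∑ A i j * |C i j|) ^ 2 ≤ tr (M A) * wᵀ A w`. The eigenvalues of `A` are at most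
`1`; those below `τ` contribute at most `τ * tr M ≤ τ * n` to `tr (M A)`, and the other `r`
contribute at most `∑ uᵀ M u` over their eigenvectors `u`. The choice
`w i ^ 2 = 1 + (n / r) * ∑ u i ^ 2` makes the last sum at most `(r / n) * ∑ C i j ^ 2`, while
`wᵀ A w ≤ wᵀ w ≤ 2 * n`. Now take `τ = ε ^ 2 / 4`, for which `r ≤ τ * t`.
-/

open scoped Matrix

section LocalToGlobal

variable {ι κ : Type*}

lemma sum_mul_le_of_sum_sq_le {u : κ → ι → ℝ} {T : Finset κ} {c : ℝ} (hc : 0 ≤ c) {w : ι → ℝ}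
    (hw : ∀ i, 0 ≤ w i) (hu : ∀ i, ∑ k ∈ T, u k i ^ 2 ≤ c * w i ^ 2) (i j : ι) :
    ∑ k ∈ T, u k i * u k j ≤ c * (w i * w j) := by
  have hi := hw i
  have hj := hw j
  refine le_of_sq_le_sq ?_ (by positivity)
  calc (∑ k ∈ T, u k i * u k j) ^ 2
      ≤ (∑ k ∈ T, u k i ^ 2) * ∑ k ∈ T, u k j ^ 2 := Finset.sum_mul_sq_le_sq_mul_sq T _ _
    _ ≤ (c * w i ^ 2) * (c * w j ^ 2) :=
        mul_le_mul (hu i) (hu j) (Finset.sum_nonneg fun k _ => sq_nonneg _) (by positivity)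
    _ = (c * (w i * w j)) ^ 2 := by ring

/-- The matrix with entries `C i j ^ 2 / (w i * w j)`: squared correlations, damped at the indices
of large weight. -/
def reweightedSq (w : ι → ℝ) (C : Matrix ι ι ℝ) : Matrix ι ι ℝ :=
  C ⊙ C ⊙ Matrix.vecMulVec w⁻¹ w⁻¹

lemma reweightedSq_apply (w : ι → ℝ) (C : Matrix ι ι ℝ) (i j : ι) :
    reweightedSq w C i j = C i j ^ 2 / (w i * w j) := by
  simp only [reweightedSq, Matrix.hadamard_apply, Matrix.vecMulVec_apply, Pi.inv_apply, ← mul_inv,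
    ← sq, div_eq_mul_inv]

lemma posSemidef_reweightedSq [Finite ι] {C : Matrix ι ι ℝ} (hC : C.PosSemidef) (w : ι → ℝ) :
    (reweightedSq w C).PosSemidef :=
  (hC.hadamard hC).hadamard (Matrix.posSemidef_vecMulVec_self_star w⁻¹)

variable [Fintype ι]

lemma dotProduct_mulVec_self_le {A : Matrix ι ι ℝ} (hA : A.IsSymm) (hA₀ : ∀ i j, 0 ≤ A i j)
    (hA₁ : ∀ i, ∑ j, A i j ≤ 1) (w : ι → ℝ) : w ⬝ᵥ A *ᵥ w ≤ w ⬝ᵥ w := by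
  have hrow : ∑ i, ∑ j, A i j * w i ^ 2 ≤ ∑ i, w i ^ 2 :=
    Finset.sum_le_sum fun i _ => by
      rw [← Finset.sum_mul]
      exact mul_le_of_le_one_left (sq_nonneg _) (hA₁ i)
  have hcol : ∑ i, ∑ j, A i j * w j ^ 2 = ∑ i, ∑ j, A i j * w i ^ 2 := by
    rw [Finset.sum_comm]
    simp only [hA.apply]
  calc w ⬝ᵥ A *ᵥ w = ∑ i, ∑ j, A i j * (w i * w j) := by
        simp only [dotProduct, Matrix.mulVec, Finset.mul_sum]
        exact Finset.sum_congr rfl fun i _ => Finset.sum_congr rfl fun j _ => by ring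
    _ ≤ ∑ i, ∑ j, (A i j * w i ^ 2 + A i j * w j ^ 2) / 2 := by
        gcongr with i _ j _
        nlinarith [mul_nonneg (hA₀ i j) (sq_nonneg (w i - w j))]
    _ = ∑ i, ∑ j, A i j * w i ^ 2 := by
        simp only [← Finset.sum_div, Finset.sum_add_distrib, hcol]
        ring
    _ ≤ ∑ i, w i ^ 2 := hrow
    _ = w ⬝ᵥ w := by simp only [dotProduct, sq]

lemma eigenvectorBasis_dotProduct_self [DecidableEq ι] {A : Matrix ι ι ℝ} (hA : A.IsHermitian)
    (k : ι) : hA.eigenvectorBasis k ⬝ᵥ hA.eigenvectorBasis k = 1 := by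
  have h := hA.eigenvectorBasis.inner_eq_one k
  rwa [EuclideanSpace.inner_eq_star_dotProduct, star_trivial] at h

lemma sum_sum_sq_eigenvectorBasis [DecidableEq ι] {A : Matrix ι ι ℝ} (hA : A.IsHermitian)
    (T : Finset ι) : ∑ i, ∑ k ∈ T, hA.eigenvectorBasis k i ^ 2 = T.card := by
  rw [Finset.sum_comm]
  calc ∑ k ∈ T, ∑ i, hA.eigenvectorBasis k i ^ 2 = ∑ _k ∈ T, (1 : ℝ) :=
        Finset.sum_congr rfl fun k _ => by
          simpa only [dotProduct, ← sq] using eigenvectorBasis_dotProduct_self hA k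
    _ = T.card := by simp only [Finset.sum_const, nsmul_eq_mul, mul_one]

lemma eigenvalues_le_one_of_sum_row_le_one [DecidableEq ι] {A : Matrix ι ι ℝ} (hA : A.IsHermitian)
    (hA₀ : ∀ i j, 0 ≤ A i j) (hA₁ : ∀ i, ∑ j, A i j ≤ 1) (k : ι) : hA.eigenvalues k ≤ 1 := by
  have h := dotProduct_mulVec_self_le (Matrix.isHermitian_iff_isSymm.mp hA) hA₀ hA₁
    (hA.eigenvectorBasis k)
  rwa [hA.mulVec_eigenvectorBasis, dotProduct_smul, eigenvectorBasis_dotProduct_self, smul_eq_mul,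
    mul_one] at h

lemma trace_eq_sum_dotProduct_mulVec [Fintype κ] (b : OrthonormalBasis κ ℝ (EuclideanSpace ℝ ι))
    (M : Matrix ι ι ℝ) : M.trace = ∑ k, b k ⬝ᵥ M *ᵥ b k := by
  classical
  have h := LinearMap.trace_eq_sum_inner (Matrix.toEuclideanLin M) b
  rw [Matrix.toEuclideanLin_eq_toLin_orthonormal, Matrix.trace_toLin_eq] at h
  rw [h]
  refine Finset.sum_congr rfl fun k _ => ?_
  rw [← Matrix.toEuclideanLin_eq_toLin_orthonormal, EuclideanSpace.inner_eq_star_dotProduct,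
    star_trivial, Matrix.ofLp_toLpLin, Matrix.toLin'_apply, dotProduct_comm]

lemma trace_mul_eq_sum_eigenvalues_mul [DecidableEq ι] {A : Matrix ι ι ℝ} (hA : A.IsHermitian)
    (M : Matrix ι ι ℝ) :
    (M * A).trace =
      ∑ k, hA.eigenvalues k * (hA.eigenvectorBasis k ⬝ᵥ M *ᵥ hA.eigenvectorBasis k) := by
  simp only [trace_eq_sum_dotProduct_mulVec hA.eigenvectorBasis, ← Matrix.mulVec_mulVec,
    hA.mulVec_eigenvectorBasis, Matrix.mulVec_smul, dotProduct_smul, smul_eq_mul]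

lemma trace_mul_le_of_eigenvalues_le_one [DecidableEq ι] {A M : Matrix ι ι ℝ} (hA : A.IsHermitian)
    (hA₁ : ∀ k, hA.eigenvalues k ≤ 1) (hM : M.PosSemidef) {τ : ℝ} (hτ : 0 ≤ τ) :
    (M * A).trace ≤ τ * M.trace + ∑ k with τ ≤ hA.eigenvalues k,
      hA.eigenvectorBasis k ⬝ᵥ M *ᵥ hA.eigenvectorBasis k := by
  rw [trace_mul_eq_sum_eigenvalues_mul hA, trace_eq_sum_dotProduct_mulVec hA.eigenvectorBasis,
    Finset.mul_sum, Finset.sum_filter, ← Finset.sum_add_distrib]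
  refine Finset.sum_le_sum fun k _ => ?_
  have hq : 0 ≤ hA.eigenvectorBasis k ⬝ᵥ M *ᵥ hA.eigenvectorBasis k := by
    simpa only [star_trivial] using hM.dotProduct_mulVec_nonneg (hA.eigenvectorBasis k)
  split_ifs with h
  · nlinarith [mul_nonneg hτ hq, hA₁ k]
  · nlinarith

lemma exists_balancing_weights {p : ι → ℝ} (hp : ∀ i, 0 ≤ p i) :
    ∃ w : ι → ℝ, (∀ i, 1 ≤ w i) ∧ (∀ i, p i ≤ (∑ j, p j) / (Fintype.card ι : ℝ) * w i ^ 2) ∧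
      w ⬝ᵥ w ≤ 2 * (Fintype.card ι : ℝ) := by
  set r := ∑ j, p j
  set n : ℝ := (Fintype.card ι : ℝ)
  have hr : 0 ≤ r := Finset.sum_nonneg fun i _ => hp i
  have hn : 0 ≤ n := Nat.cast_nonneg _
  have hq : ∀ i, 0 ≤ n / r * p i := fun i => mul_nonneg (div_nonneg hn hr) (hp i)
  have hw : ∀ i, √(1 + n / r * p i) ^ 2 = 1 + n / r * p i := fun i =>
    Real.sq_sqrt (by linarith [hq i])
  refine ⟨fun i => √(1 + n / r * p i), fun i => Real.one_le_sqrt.mpr (by linarith [hq i]),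
    fun i => ?_, ?_⟩
  · rw [hw]
    have hn' : 0 < n := Nat.cast_pos.mpr (Fintype.card_pos_iff.mpr ⟨i⟩)
    have hpr : p i ≤ r := Finset.single_le_sum (fun j _ => hp j) (Finset.mem_univ i)
    rcases hr.eq_or_lt with h | h
    · simpa [← h] using hpr
    · calc p i ≤ r / n + p i := le_add_of_nonneg_left (by positivity)
        _ = r / n * (1 + n / r * p i) := by field_simp
  · calc (∑ i, √(1 + n / r * p i) * √(1 + n / r * p i)) = n + n / r * r := by
          simp only [← sq, hw, Finset.sum_add_distrib, ← Finset.mul_sum, Finset.sum_const,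
            Finset.card_univ, nsmul_eq_mul, mul_one, r, n]
      _ ≤ n + n := by
          gcongr
          exact (div_mul_comm n r r).trans_le (mul_le_of_le_one_left hn (div_self_le_one r))
      _ = 2 * n := by ring

lemma trace_reweightedSq_le {C : Matrix ι ι ℝ} (hC : C.PosSemidef) (hC₁ : ∀ i, C i i ≤ 1)
    {w : ι → ℝ} (hw : ∀ i, 1 ≤ w i) : (reweightedSq w C).trace ≤ Fintype.card ι := by
  have hdiag : ∀ i, reweightedSq w C i i ≤ 1 := fun i => by
    rw [reweightedSq_apply]
    exact div_le_one_of_le₀ ((pow_le_one₀ hC.diag_nonneg (hC₁ i)).trans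
      (one_le_mul_of_one_le_of_one_le (hw i) (hw i)))
      (mul_nonneg (by linarith [hw i]) (by linarith [hw i]))
  calc (reweightedSq w C).trace ≤ ∑ _i : ι, (1 : ℝ) := Finset.sum_le_sum fun i _ => hdiag i
    _ = Fintype.card ι := by simp

lemma sq_sum_mul_abs_le_trace_mul {A : Matrix ι ι ℝ} (hA : A.IsSymm) (hA₀ : ∀ i j, 0 ≤ A i j)
    (C : Matrix ι ι ℝ) {w : ι → ℝ} (hw : ∀ i, 0 < w i) :
    (∑ i, ∑ j, A i j * |C i j|) ^ 2 ≤ (reweightedSq w C * A).trace * (w ⬝ᵥ A *ᵥ w) := by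
  have htrace : (reweightedSq w C * A).trace = ∑ i, ∑ j, reweightedSq w C i j * A i j := by
    simp only [Matrix.trace, Matrix.diag_apply, Matrix.mul_apply, hA.apply]
  have hquad : w ⬝ᵥ A *ᵥ w = ∑ i, ∑ j, w i * (A i j * w j) := by
    simp only [dotProduct, Matrix.mulVec, Finset.mul_sum]
  rw [htrace, hquad]
  simp only [← Finset.sum_product', reweightedSq_apply]
  refine Finset.sum_sq_le_sum_mul_sum_of_sq_le_mul _ (fun x _ => ?_) (fun x _ => ?_) fun x _ => ?_
  all_goals have hi := hw x.1; have hj := hw x.2; have hx := hA₀ x.1 x.2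
  · positivity
  · positivity
  · rw [mul_pow, sq_abs]
    field_simp
    rfl

lemma sum_dotProduct_reweightedSq_mulVec_le {u : κ → ι → ℝ} {T : Finset κ} {c : ℝ} (hc : 0 ≤ c)
    {w : ι → ℝ} (hw : ∀ i, 0 < w i) (hu : ∀ i, ∑ k ∈ T, u k i ^ 2 ≤ c * w i ^ 2)
    (C : Matrix ι ι ℝ) :
    ∑ k ∈ T, u k ⬝ᵥ reweightedSq w C *ᵥ u k ≤ c * ∑ i, ∑ j, C i j ^ 2 := by
  have hswap : ∑ k ∈ T, u k ⬝ᵥ reweightedSq w C *ᵥ u k =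
      ∑ i, ∑ j, (∑ k ∈ T, u k i * u k j) * reweightedSq w C i j := by
    simp only [dotProduct, Matrix.mulVec, Finset.mul_sum, Finset.sum_mul]
    rw [Finset.sum_comm]
    refine Finset.sum_congr rfl fun i _ => ?_
    rw [Finset.sum_comm]
    exact Finset.sum_congr rfl fun j _ => Finset.sum_congr rfl fun k _ => by ring
  rw [hswap, Finset.mul_sum]
  refine Finset.sum_le_sum fun i _ => ?_
  rw [Finset.mul_sum]
  refine Finset.sum_le_sum fun j _ => ?_
  have hi := hw i
  have hj := hw j
  rw [reweightedSq_apply]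
  calc (∑ k ∈ T, u k i * u k j) * (C i j ^ 2 / (w i * w j))
      ≤ c * (w i * w j) * (C i j ^ 2 / (w i * w j)) :=
        mul_le_mul_of_nonneg_right (sum_mul_le_of_sum_sq_le hc (fun i => (hw i).le) hu i j)
          (by positivity)
    _ = c * C i j ^ 2 := by field_simp

theorem sq_sum_mul_abs_le_of_eigenvalues [DecidableEq ι] {A C : Matrix ι ι ℝ} (hA : A.IsHermitian)
    (hA₀ : ∀ i j, 0 ≤ A i j) (hA₁ : ∀ i, ∑ j, A i j ≤ 1) (hC : C.PosSemidef)
    (hC₁ : ∀ i, C i i ≤ 1) {τ : ℝ} (hτ : 0 ≤ τ) :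
    (∑ i, ∑ j, A i j * |C i j|) ^ 2 ≤ 2 * (τ * (Fintype.card ι : ℝ) ^ 2 +
      (Finset.univ.filter fun k => τ ≤ hA.eigenvalues k).card * ∑ i, ∑ j, C i j ^ 2) := by
  set T : Finset ι := {k | τ ≤ hA.eigenvalues k}
  set n : ℝ := (Fintype.card ι : ℝ)
  have hn : 0 ≤ n := Nat.cast_nonneg _
  obtain ⟨w, hw₁, hwT, hw₂⟩ :=
    exists_balancing_weights fun i => Finset.sum_nonneg fun k (_ : k ∈ T) =>
      sq_nonneg (hA.eigenvectorBasis k i)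
  rw [sum_sum_sq_eigenvectorBasis] at hwT
  have hw : ∀ i, 0 < w i := fun i => one_pos.trans_le (hw₁ i)
  have hsymm : A.IsSymm := Matrix.isHermitian_iff_isSymm.mp hA
  have htop : ∑ k ∈ T, hA.eigenvectorBasis k ⬝ᵥ reweightedSq w C *ᵥ hA.eigenvectorBasis k ≤
      T.card / n * ∑ i, ∑ j, C i j ^ 2 :=
    sum_dotProduct_reweightedSq_mulVec_le (by positivity) hw hwT C
  have htrace : (reweightedSq w C * A).trace ≤
      τ * n + T.card / n * ∑ i, ∑ j, C i j ^ 2 :=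
    (trace_mul_le_of_eigenvalues_le_one hA (eigenvalues_le_one_of_sum_row_le_one hA hA₀ hA₁)
      (posSemidef_reweightedSq hC w) hτ).trans
      (add_le_add (mul_le_mul_of_nonneg_left (trace_reweightedSq_le hC hC₁ hw₁) hτ) htop)
  have hquad : 0 ≤ w ⬝ᵥ A *ᵥ w := dotProduct_nonneg_of_nonneg (fun i => (hw i).le) fun i =>
    dotProduct_nonneg_of_nonneg (hA₀ i) fun j => (hw j).le
  have hcard : n / n * (T.card * ∑ i, ∑ j, C i j ^ 2) ≤ T.card * ∑ i, ∑ j, C i j ^ 2 :=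
    mul_le_of_le_one_left (by positivity) (div_self_le_one n)
  calc (∑ i, ∑ j, A i j * |C i j|) ^ 2
      ≤ (reweightedSq w C * A).trace * (w ⬝ᵥ A *ᵥ w) :=
        sq_sum_mul_abs_le_trace_mul hsymm hA₀ C hw
    _ ≤ (τ * n + T.card / n * ∑ i, ∑ j, C i j ^ 2) * (2 * n) :=
        mul_le_mul htrace ((dotProduct_mulVec_self_le hsymm hA₀ hA₁ w).trans hw₂) hquad
          (by positivity)
    _ = 2 * (τ * n ^ 2 + n / n * (T.card * ∑ i, ∑ j, C i j ^ 2)) := by ring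
    _ ≤ 2 * (τ * n ^ 2 + T.card * ∑ i, ∑ j, C i j ^ 2) := by
        linarith only [hcard]

end LocalToGlobal

section OrthogonalProjection

variable {E : Type*} [NormedAddCommGroup E] [InnerProductSpace ℝ E]

lemma norm_sub_inner_smul_sq_le (a : E) {d : E} (hd : ‖d‖ ≤ 1) :
    ‖a - ⟪a, d⟫ • d‖ ^ 2 ≤ ‖a‖ ^ 2 - ⟪a, d⟫ ^ 2 := by
  have hd₂ : ⟪a, d⟫ ^ 2 * ‖d‖ ^ 2 ≤ ⟪a, d⟫ ^ 2 :=
    mul_le_of_le_one_right (sq_nonneg _) (pow_le_one₀ (norm_nonneg d) hd)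
  rw [norm_sub_sq_real, real_inner_smul_right, norm_smul, mul_pow, Real.norm_eq_abs, sq_abs]
  linarith only [hd₂]

lemma norm_starProjection_orthogonal_sq_le {K K' : Submodule ℝ E} [K.HasOrthogonalProjection]
    [K'.HasOrthogonalProjection] (h : K ≤ K') (x : E) {y : E} (hy : y ∈ K') (hy₁ : ‖y‖ ≤ 1) :
    ‖K'ᗮ.starProjection x‖ ^ 2 ≤
      ‖Kᗮ.starProjection x‖ ^ 2 - ⟪Kᗮ.starProjection x, Kᗮ.starProjection y⟫ ^ 2 := by
  set a := Kᗮ.starProjection x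
  set d := Kᗮ.starProjection y
  have hd₁ : ‖d‖ ≤ 1 := (Kᗮ.norm_starProjection_apply_le y).trans hy₁
  have hd : d ∈ K' := by
    simp only [d, K.starProjection_orthogonal_val]
    exact K'.sub_mem hy (h (K.starProjection_apply_mem y))
  have hxa : x - (a - ⟪a, d⟫ • d) ∈ K' := by
    have hx : x - (a - ⟪a, d⟫ • d) = K.starProjection x + ⟪a, d⟫ • d := by
      simp only [a, K.starProjection_orthogonal_val]
      abel
    rw [hx]
    exact K'.add_mem (h (K.starProjection_apply_mem x)) (K'.smul_mem _ hd)
  have hproj : K'ᗮ.starProjection x = K'ᗮ.starProjection (a - ⟪a, d⟫ • d) := by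
    rw [← sub_eq_zero, ← map_sub, K'.starProjection_orthogonal_val,
      Submodule.starProjection_eq_self_iff.mpr hxa, sub_self]
  calc ‖K'ᗮ.starProjection x‖ ^ 2 ≤ ‖a - ⟪a, d⟫ • d‖ ^ 2 := by
        rw [hproj]
        gcongr
        exact K'ᗮ.norm_starProjection_apply_le _
    _ ≤ ‖a‖ ^ 2 - ⟪a, d⟫ ^ 2 := norm_sub_inner_smul_sq_le a hd₁

end OrthogonalProjection

lemma exists_mul_le_of_potential {ι : Type*} [DecidableEq ι] {Φ g : Finset ι → ℝ} {t : ℕ}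
    (hΦ : ∀ S, S.card ≤ t → 0 ≤ Φ S)
    (hstep : ∀ S, S.card < t → ∃ j, g S ≤ Φ S - Φ (insert j S)) (m : ℕ) :
    ∀ S₀, S₀.card + m ≤ t → ∃ S, S.card ≤ t ∧ m * g S ≤ Φ S₀ := by
  induction m with
  | zero => exact fun S₀ h₀ => ⟨S₀, h₀, by simpa using hΦ S₀ h₀⟩
  | succ m ih =>
    intro S₀ h₀
    obtain ⟨j, hj⟩ := hstep S₀ (by lia)
    obtain ⟨S, hS, hle⟩ := ih (insert j S₀) (by have := Finset.card_insert_le j S₀; lia)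
    push_cast
    rcases le_total (g S) (g S₀) with h | h
    · exact ⟨S, hS, by linarith⟩
    · exact ⟨S₀, by lia, by linarith [mul_le_mul_of_nonneg_left h (Nat.cast_nonneg (α := ℝ) m)]⟩

namespace SAFamily

variable {n k : ℕ} (F : SAFamily n k) {R U : Finset (Fin n)}

/-- The expectation of a function of the assignment to `U` under the local distribution on `U`. -/
def localExp (U : Finset (Fin n)) (g : Asg U → ℝ) : ℝ := ∑ y, F.μ U y * g y

lemma margTo_eq (h : R ⊆ U) (hU : U.card ≤ k) (z : Asg R) : margTo (F.μ U) h z = F.μ R z := by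
  have key : ∀ {W : Finset (Fin n)}, W = R → ∀ (hWU : W ⊆ U) (hWR : W ⊆ R),
      (∀ w, margTo (F.μ U) hWU w = margTo (F.μ R) hWR w) → margTo (F.μ U) h z = F.μ R z := by
    rintro _ rfl hWU hWR hcons
    exact (hcons z).trans (Fintype.sum_ite_eq' z _)
  exact key (Finset.inter_eq_right.mpr h) Finset.inter_subset_left Finset.inter_subset_right
    (F.consistent U R ((Finset.union_eq_left.mpr h).symm ▸ hU))

lemma localExp_comp_res (h : R ⊆ U) (hU : U.card ≤ k) (g : Asg R → ℝ) :
    F.localExp U (fun z => g (res h z)) = F.localExp R g := by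
  simp only [localExp, ← F.margTo_eq h hU, margTo, Finset.sum_mul, ite_mul, zero_mul]
  rw [Finset.sum_comm]
  simp only [Finset.sum_ite_eq, Finset.mem_univ, if_true]

lemma μ_le_μ_res (h : R ⊆ U) (hU : U.card ≤ k) (z : Asg U) : F.μ U z ≤ F.μ R (res h z) := by
  rw [← F.margTo_eq h hU, margTo, ← Finset.sum_filter]
  exact Finset.single_le_sum (fun y _ => F.nonneg U hU y)
    (Finset.mem_filter.mpr ⟨Finset.mem_univ z, rfl⟩)

lemma μ_mul_sum_ite_res_div (h : R ⊆ U) (hU : U.card ≤ k) (g : Asg U → ℝ) (y : Asg R) :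
    F.μ R y * ((∑ z, if res h z = y then F.μ U z * g z else 0) / F.μ R y) =
      ∑ z, if res h z = y then F.μ U z * g z else 0 := by
  refine mul_div_cancel_of_imp' fun hy => Finset.sum_eq_zero fun z _ => ?_
  split_ifs with hz
  · have hle : F.μ U z ≤ 0 := (F.μ_le_μ_res h hU z).trans_eq (hz ▸ hy)
    rw [hle.antisymm (F.nonneg U hU z), zero_mul]
  · rfl

lemma localExp_condExp1_mul {S : Finset (Fin n)} {i : Fin n} (hS : (S ∪ {i}).card ≤ k)
    (g : Asg S → ℝ) :
    F.localExp S (fun y => condExp1 F S y i * g y) = F.localExp (S ∪ {i}) fun z =>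
      (z ⟨i, by simp⟩ : ℝ) * g (res Finset.subset_union_left z) := by
  simp only [localExp, ← mul_assoc, condExp1, F.μ_mul_sum_ite_res_div Finset.subset_union_left hS,
    Finset.sum_mul, ite_mul, zero_mul]
  rw [Finset.sum_comm]
  simp only [Finset.sum_ite_eq, Finset.mem_univ, if_true]

lemma localExp_condExp2 {S : Finset (Fin n)} {i j : Fin n} (hS : (S ∪ {i, j}).card ≤ k) :
    F.localExp S (fun y => condExp2 F S y i j) = pairExp F i j := by
  have hmarg : pairExp F i j = F.localExp (S ∪ {i, j}) fun z =>
      (z ⟨i, by simp⟩ : ℝ) * (z ⟨j, by simp⟩ : ℝ) := by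
    rw [pairExp]
    simp only [mul_assoc]
    exact (F.localExp_comp_res Finset.subset_union_right hS _).symm
  rw [hmarg]
  simp only [localExp, condExp2, mul_assoc,
    F.μ_mul_sum_ite_res_div Finset.subset_union_left hS]
  rw [Finset.sum_comm]
  simp only [Finset.sum_ite_eq, Finset.mem_univ, if_true]

lemma condCov_eq {S : Finset (Fin n)} {i j : Fin n} (hS : (S ∪ {i, j}).card ≤ k) :
    condCov F S i j =
      pairExp F i j - F.localExp S fun y => condExp1 F S y i * condExp1 F S y j := by
  rw [← F.localExp_condExp2 hS]
  simp only [condCov, localExp, mul_sub, Finset.sum_sub_distrib]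

end SAFamily

namespace LasserreSol

variable {n k : ℕ} (L : LasserreSol n k) {S T U : Finset (Fin n)}

/-- The vector realizing a function of the assignment to `S`; the indicator of `α` is sent to
`vec S α`, and inner products become expectations of products. -/
def funVec (S : Finset (Fin n)) : (Asg S → ℝ) →ₗ[ℝ] EuclideanSpace ℝ (Fin L.dim) :=
  Fintype.linearCombination ℝ (L.vec S)

lemma inner_funVec (hS : S ⊆ U) (hT : T ⊆ U) (hU : U.card ≤ k) (f : Asg S → ℝ)
    (g : Asg T → ℝ) :
    ⟪L.funVec S f, L.funVec T g⟫ = L.localExp U fun z => f (res hS z) * g (res hT z) := by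
  have hST : S ∪ T ⊆ U := Finset.union_subset hS hT
  have hcard : (S ∪ T).card ≤ k := (Finset.card_le_card hST).trans hU
  calc ⟪L.funVec S f, L.funVec T g⟫
      = L.localExp (S ∪ T) fun z =>
          f (res Finset.subset_union_left z) * g (res Finset.subset_union_right z) := by
        simp only [funVec, Fintype.linearCombination_apply, sum_inner, inner_sum,
          real_inner_smul_left, real_inner_smul_right, L.inner_eq S T hcard, SAFamily.localExp,
          Finset.mul_sum]
        rw [Finset.sum_congr rfl fun β _ => Finset.sum_comm, Finset.sum_comm]
        refine Finset.sum_congr rfl fun z _ => ?_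
        simp only [ite_and, mul_ite, mul_zero, Finset.sum_ite_eq, Finset.mem_univ, if_true]
        ring
    _ = L.localExp U fun z => f (res hS z) * g (res hT z) :=
        (L.localExp_comp_res hST hU _).symm

lemma funVec_comp_res (h : S ⊆ U) (hU : U.card ≤ k) (f : Asg S → ℝ) :
    L.funVec U (fun z => f (res h z)) = L.funVec S f := by
  rw [← sub_eq_zero, ← inner_self_eq_zero (𝕜 := ℝ)]
  simp only [inner_sub_left, inner_sub_right, L.inner_funVec h h hU,
    L.inner_funVec h (Finset.Subset.refl U) hU, L.inner_funVec (Finset.Subset.refl U) h hU,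
    L.inner_funVec (Finset.Subset.refl U) (Finset.Subset.refl U) hU]
  exact (congrArg₂ _ (sub_self _) (sub_self _)).trans (sub_zero _)

/-- The span of the vectors `vec S α`: those realizing a function of the assignment to `S`. -/
def localSpace (S : Finset (Fin n)) : Submodule ℝ (EuclideanSpace ℝ (Fin L.dim)) :=
  LinearMap.range (L.funVec S)

lemma localSpace_mono (h : S ⊆ U) (hU : U.card ≤ k) : L.localSpace S ≤ L.localSpace U := by
  rintro _ ⟨f, rfl⟩
  exact ⟨_, L.funVec_comp_res h hU f⟩

/-- The vector realizing the `i`-th spin. -/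
def spin (i : Fin n) : EuclideanSpace ℝ (Fin L.dim) :=
  L.funVec {i} fun y => y ⟨i, Finset.mem_singleton_self i⟩

lemma spin_mem_localSpace {i : Fin n} (hi : i ∈ S) (hS : S.card ≤ k) : L.spin i ∈ L.localSpace S :=
  L.localSpace_mono (Finset.singleton_subset_iff.mpr hi) hS ⟨_, rfl⟩

lemma inner_spin_spin {i j : Fin n} (h : ({i, j} : Finset (Fin n)).card ≤ k) :
    ⟪L.spin i, L.spin j⟫ = pairExp L.toSAFamily i j := by
  simp only [pairExp, mul_assoc]
  exact L.inner_funVec (by simp) (by simp) h _ _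

lemma norm_spin (hk : 1 ≤ k) (i : Fin n) : ‖L.spin i‖ = 1 := by
  have hsq : ∀ a : ↥B, (a : ℝ) * a = 1 := by
    rintro ⟨a, ha⟩
    rcases Finset.mem_insert.mp ha with rfl | ha
    · norm_num
    · norm_num [Finset.mem_singleton.mp ha]
  have hi : ({i} : Finset (Fin n)).card ≤ k := (Finset.card_singleton i).trans_le hk
  rw [← sq_eq_sq₀ (norm_nonneg _) zero_le_one, ← real_inner_self_eq_norm_sq, spin,
    L.inner_funVec (Finset.Subset.refl _) (Finset.Subset.refl _) hi]
  simp only [SAFamily.localExp, res, hsq, mul_one, L.sum_one _ hi, one_pow]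

lemma inner_spin_funVec {i : Fin n} (h : (S ∪ {i}).card ≤ k) (g : Asg S → ℝ) :
    ⟪L.spin i, L.funVec S g⟫ = L.localExp S fun y => condExp1 L.toSAFamily S y i * g y := by
  rw [L.localExp_condExp1_mul h]
  exact L.inner_funVec Finset.subset_union_right Finset.subset_union_left h _ g

lemma starProjection_spin {i : Fin n} (h : (S ∪ {i}).card ≤ k) :
    (L.localSpace S).starProjection (L.spin i) =
      L.funVec S fun y => condExp1 L.toSAFamily S y i := by
  refine Submodule.eq_starProjection_of_mem_orthogonal (LinearMap.mem_range_self _ _) ?_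
  rw [Submodule.mem_orthogonal']
  rintro _ ⟨g, rfl⟩
  have hS : S.card ≤ k := (Finset.card_le_card Finset.subset_union_left).trans h
  rw [inner_sub_left, L.inner_spin_funVec h,
    L.inner_funVec (Finset.Subset.refl S) (Finset.Subset.refl S) hS]
  exact sub_self _

/-- The part of the `i`-th spin that is not determined by the assignment to `S`; its inner
products are the average conditional covariances given `S`. -/
def residual (S : Finset (Fin n)) (i : Fin n) : EuclideanSpace ℝ (Fin L.dim) :=
  (L.localSpace S)ᗮ.starProjection (L.spin i)

lemma inner_residual_residual (hS : S.card + 2 ≤ k) (i j : Fin n) :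
    ⟪L.residual S i, L.residual S j⟫ = condCov L.toSAFamily S i j := by
  have hU : (S ∪ {i, j}).card ≤ k :=
    (Finset.card_union_le _ _).trans ((Nat.add_le_add_left Finset.card_le_two _).trans hS)
  have hle : ∀ {R : Finset (Fin n)}, R ⊆ S ∪ {i, j} → R.card ≤ k := fun hR =>
    (Finset.card_le_card hR).trans hU
  have hj : (S ∪ {j}).card ≤ k := hle (by grind)
  have hi : (S ∪ {i}).card ≤ k := hle (by grind)
  rw [L.condCov_eq hU, ← L.inner_spin_spin (hle Finset.subset_union_right), residual, residual,
    Submodule.inner_starProjection_left_eq_right,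
    Submodule.starProjection_eq_self_iff.mpr (Submodule.starProjection_apply_mem _ _),
    Submodule.starProjection_orthogonal_val, inner_sub_right, L.starProjection_spin hj,
    L.inner_spin_funVec hi]

lemma posSemidef_condCov (hS : S.card + 2 ≤ k) :
    (Matrix.of (condCov L.toSAFamily S)).PosSemidef := by
  have hgram : Matrix.of (condCov L.toSAFamily S) = Matrix.gram ℝ (L.residual S) :=
    Matrix.ext fun i j => (L.inner_residual_residual hS i j).symm
  rw [hgram]
  exact Matrix.posSemidef_gram ℝ _

lemma norm_residual_sq (hS : S.card + 2 ≤ k) (i : Fin n) :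
    ‖L.residual S i‖ ^ 2 = condCov L.toSAFamily S i i := by
  rw [← real_inner_self_eq_norm_sq, L.inner_residual_residual hS]

lemma condCov_self_le_one (hS : S.card + 2 ≤ k) (i : Fin n) : condCov L.toSAFamily S i i ≤ 1 := by
  rw [← L.norm_residual_sq hS]
  refine pow_le_one₀ (norm_nonneg _) ?_
  exact ((L.localSpace S)ᗮ.norm_starProjection_apply_le _).trans_eq (L.norm_spin (by lia) i)

lemma condCov_insert_self_le {j : Fin n} (hS : (insert j S).card + 2 ≤ k) (i : Fin n) :
    condCov L.toSAFamily (insert j S) i i ≤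
      condCov L.toSAFamily S i i - condCov L.toSAFamily S i j ^ 2 := by
  have hle : (insert j S).card ≤ k := by lia
  have hS' : S.card + 2 ≤ k :=
    (Nat.add_le_add_right (Finset.card_le_card (Finset.subset_insert j S)) 2).trans hS
  rw [← L.norm_residual_sq hS, ← L.norm_residual_sq hS', ← L.inner_residual_residual hS']
  exact norm_starProjection_orthogonal_sq_le (L.localSpace_mono (Finset.subset_insert j S) hle)
    (L.spin i) (L.spin_mem_localSpace (Finset.mem_insert_self j S) hle)
    (L.norm_spin (by lia) j).le

lemma exists_sum_condCov_insert_self_le (hS : S.card + 3 ≤ k) (hn : n ≠ 0) :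
    ∃ j, ∑ i, ∑ j, condCov L.toSAFamily S i j ^ 2 ≤
      n * ∑ i, condCov L.toSAFamily S i i - n * ∑ i, condCov L.toSAFamily (insert j S) i i := by
  have : NeZero n := ⟨hn⟩
  obtain ⟨j, -, hj⟩ : ∃ j ∈ Finset.univ, ∑ i, ∑ j, condCov L.toSAFamily S i j ^ 2 ≤
      n * ∑ i, condCov L.toSAFamily S i j ^ 2 := by
    refine Finset.exists_le_of_sum_le Finset.univ_nonempty ?_
    rw [Finset.sum_const, Finset.card_univ, Fintype.card_fin, nsmul_eq_mul, ← Finset.mul_sum,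
      Finset.sum_comm]
  refine ⟨j, hj.trans ?_⟩
  have hcard : (insert j S).card + 2 ≤ k := by
    have := Finset.card_insert_le j S
    lia
  rw [← mul_sub, ← Finset.sum_sub_distrib]
  gcongr with i
  linarith only [L.condCov_insert_self_le hcard i]

lemma exists_mul_sum_condCov_sq_le {t : ℕ} (ht : t + 2 ≤ k) :
    ∃ S : Finset (Fin n), S.card ≤ t ∧
      t * ∑ i, ∑ j, condCov L.toSAFamily S i j ^ 2 ≤ (n : ℝ) ^ 2 := by
  rcases eq_or_ne n 0 with rfl | hn
  · exact ⟨∅, by simp, by simp⟩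
  obtain ⟨S, hS, hle⟩ := exists_mul_le_of_potential
    (Φ := fun S => n * ∑ i, condCov L.toSAFamily S i i)
    (g := fun S => ∑ i, ∑ j, condCov L.toSAFamily S i j ^ 2) (t := t)
    (fun S hS => mul_nonneg (Nat.cast_nonneg n) (Finset.sum_nonneg fun i _ =>
      (L.posSemidef_condCov (by lia)).diag_nonneg))
    (fun S hS => L.exists_sum_condCov_insert_self_le (by lia) hn) t ∅ (by simp)
  refine ⟨S, hS, hle.trans ?_⟩
  calc n * ∑ i, condCov L.toSAFamily ∅ i i ≤ n * ∑ _i : Fin n, (1 : ℝ) := by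
        gcongr with i
        exact L.condCov_self_le_one (by simp; lia) i
    _ = (n : ℝ) ^ 2 := by
        rw [Finset.sum_const, Finset.card_univ, Fintype.card_fin, nsmul_eq_mul, mul_one, sq]

theorem exists_sq_sum_mul_abs_condCov_le {t : ℕ} (ht : t + 2 ≤ k) {A : Matrix (Fin n) (Fin n) ℝ}
    (hA : A.IsHermitian) (hA₀ : ∀ i j, 0 ≤ A i j) (hA₁ : ∀ i, ∑ j, A i j ≤ 1) {τ : ℝ}
    (hτ : 0 ≤ τ) (hrank : (thresholdRank hA τ : ℝ) ≤ t * τ) :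
    ∃ S : Finset (Fin n), S.card ≤ t ∧
      (∑ i, ∑ j, A i j * |condCov L.toSAFamily S i j|) ^ 2 ≤ 4 * τ * (n : ℝ) ^ 2 := by
  obtain ⟨S, hS, hlow⟩ := L.exists_mul_sum_condCov_sq_le ht
  have hS₂ : S.card + 2 ≤ k := (Nat.add_le_add_right hS 2).trans ht
  set Q := ∑ i, ∑ j, condCov L.toSAFamily S i j ^ 2
  have hglobal : thresholdRank hA τ * Q ≤ τ * n ^ 2 :=
    calc thresholdRank hA τ * Q ≤ t * τ * Q := by gcongr
      _ = τ * (t * Q) := by ring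
      _ ≤ τ * n ^ 2 := by gcongr
  have hlocal : (∑ i, ∑ j, A i j * |condCov L.toSAFamily S i j|) ^ 2 ≤
      2 * (τ * (Fintype.card (Fin n) : ℝ) ^ 2 + thresholdRank hA τ * Q) :=
    sq_sum_mul_abs_le_of_eigenvalues hA hA₀ hA₁ (L.posSemidef_condCov hS₂)
      (L.condCov_self_le_one hS₂) hτ
  rw [Fintype.card_fin] at hlocal
  exact ⟨S, hS, by linarith only [hlocal, hglobal]⟩

end LasserreSol

theorem correlation_rounding_low_threshold_rank_general {n t : ℕ} {ε J' : ℝ} (hε : 0 < ε)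
    (hJ' : 0 < J') {J : Fin n → Fin n → ℝ} (hJ : ∀ i, ∑ j, |J i j| ≤ J')
    {A : Matrix (Fin n) (Fin n) ℝ} (hAJ : A = fun i j => |J i j| / J') (hA : A.IsHermitian)
    (ht : (thresholdRank hA (1 / 4 * ε ^ 2) : ℝ) / (1 / 4 * ε ^ 2) ≤ t)
    (L : LasserreSol n (t + 2)) :
    ∃ S : Finset (Fin n), S.card ≤ t ∧
      ∑ i, ∑ j, |J i j| * |condCov L.toSAFamily S i j| ≤ ε * n * J' := by
  have hA₀ : ∀ i j, 0 ≤ A i j := fun i j => by rw [hAJ]; positivity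
  have hA₁ : ∀ i, ∑ j, A i j ≤ 1 := fun i => by
    rw [hAJ, ← Finset.sum_div]
    exact div_le_one_of_le₀ (hJ i) hJ'.le
  obtain ⟨S, hS, hsq⟩ := L.exists_sq_sum_mul_abs_condCov_le le_rfl hA hA₀ hA₁ (by positivity)
    ((div_le_iff₀ (by positivity)).mp ht)
  have hcorr : ∑ i, ∑ j, A i j * |condCov L.toSAFamily S i j| ≤ ε * n :=
    le_of_sq_le_sq (hsq.trans_eq (by ring)) (by positivity)
  refine ⟨S, hS, ?_⟩
  calc ∑ i, ∑ j, |J i j| * |condCov L.toSAFamily S i j|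
      = (∑ i, ∑ j, A i j * |condCov L.toSAFamily S i j|) * J' := by
        simp only [hAJ, Finset.sum_mul, div_mul_eq_mul_div, div_mul_cancel₀ _ hJ'.ne']
    _ ≤ ε * n * J' := by gcongr

/-- Correlation rounding on low threshold rank Ising models: there is a universal
`c > 0` such that for any regular Ising model with adjacency matrix `A` and
`t = ⌈rank(cε²)/(cε²)⌉`, any level-`(t+2)` Lasserre solution admits a seed set
`S` of size at most `t` whose conditioning drops the total conditional
covariance seen by the couplings to at most `ε n J'`. -/
theorem correlation_rounding_low_threshold_rank :
    ∃ c : ℝ, 0 < c ∧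
      ∀ n : ℕ, 1 ≤ n → ∀ ε : ℝ, ε ∈ Set.Ioo (0 : ℝ) 1 →
        ∀ J : Fin n → Fin n → ℝ, (∀ i j : Fin n, J i j = J j i) →
        ∀ J' : ℝ, 0 < J' → (∀ i : Fin n, ∑ j : Fin n, |J i j| = J') →
        ∀ A : Matrix (Fin n) (Fin n) ℝ, A = (fun i j : Fin n => |J i j| / J') →
        ∀ hA : A.IsHermitian,
        ∀ t : ℕ, t = ⌈(thresholdRank hA (c * ε ^ 2) : ℝ) / (c * ε ^ 2)⌉₊ →
        ∀ L : LasserreSol n (t + 2),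
          ∃ S : Finset (Fin n), S.card ≤ t ∧
            |∑ i : Fin n, ∑ j : Fin n, J i j * condCov L.toSAFamily S i j|
              ≤ ε * n * J' := by
  refine ⟨1 / 4, by norm_num, fun n _ ε hε J _ J' hJ' hJ A hAJ hA t ht L => ?_⟩
  obtain ⟨S, hS, hle⟩ := correlation_rounding_low_threshold_rank_general hε.1 hJ'
    (fun i => (hJ i).le) hAJ hA (ht ▸ Nat.le_ceil _) L
  refine ⟨S, hS, le_trans ?_ hle⟩
  simp only [← abs_mul]
  exact (Finset.abs_sum_le_sum_abs _ _).trans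
    (Finset.sum_le_sum fun i _ => Finset.abs_sum_le_sum_abs _ _)
end
end
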